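/- arXiv:1612.03372 — 3 statements merged into one kernel-verified Lean document; each statement's English description precedes it below -/
import Mathlib

section
/- Let n ≥ 3 and 1 ≤ k < n/2, let L be the Laplacian matrix of the generalized Petersen graph GP(n,k), viewed as a ℤ-linear map ℤ^{2n} → ℤ^{2n}, and let 𝒜 be the (2k+2)×(2k+2) companion matrix of the polynomial Q_k. Then there is an isomorphism of abelian groups coker L ≅ coker(𝒜^n − I), where I is the identity matrix of size 2k+2. -/
open Polynomial

def gpRel (n k : ℕ) : (ZMod n ⊕ ZMod n) → (ZMod n ⊕ ZMod n) → Prop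
  | Sum.inl i, Sum.inl j => j = i + 1
  | Sum.inl i, Sum.inr j => j = i
  | Sum.inr _, Sum.inl _ => False
  | Sum.inr i, Sum.inr j => j = i + (k : ZMod n)

instance (n k : ℕ) : DecidableRel (gpRel n k) := fun a b =>
  match a, b with
  | Sum.inl i, Sum.inl j => inferInstanceAs (Decidable (j = i + 1))
  | Sum.inl i, Sum.inr j => inferInstanceAs (Decidable (j = i))
  | Sum.inr _, Sum.inl _ => inferInstanceAs (Decidable False)
  | Sum.inr i, Sum.inr j => inferInstanceAs (Decidable (j = i + (k : ZMod n)))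

/-- The generalized Petersen graph `GP(n,k)`; `Sum.inl i` is the outer vertex `u_i`,
`Sum.inr i` the inner vertex `v_i`, and the edges are `u_i u_{i+1}`, `u_i v_i`,
`v_i v_{i+k}` (indices mod `n`). -/
def genPetersen (n k : ℕ) : SimpleGraph (ZMod n ⊕ ZMod n) :=
  SimpleGraph.fromRel (gpRel n k)

instance (n k : ℕ) : DecidableRel (genPetersen n k).Adj := fun a b =>
  inferInstanceAs (Decidable (a ≠ b ∧ (gpRel n k a b ∨ gpRel n k b a)))

/-- The monic integer polynomial `Q_k(z) = z^{k+1}·((3 − z − z⁻¹)(3 − z^k − z^{−k}) − 1)`,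
written out as
`Q_k(z) = 1 − 3z + z² − 3z^k + 8z^{k+1} − 3z^{k+2} + z^{2k} − 3z^{2k+1} + z^{2k+2}`. -/
noncomputable def gpCharPoly (k : ℕ) : Polynomial ℤ :=
  1 - 3 * X + X ^ 2 - 3 * X ^ k + 8 * X ^ (k + 1) - 3 * X ^ (k + 2)
    + X ^ (2 * k) - 3 * X ^ (2 * k + 1) + X ^ (2 * k + 2)

/-- The `(2k+2) × (2k+2)` companion matrix `𝒜` of `Q_k`: the first `2k+1` rows form
the block `(0 | I_{2k+1})` and the last row is `(−1, −a_1, …, −a_{2k+1})`, where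
`Q_k(z) = 1 + a_1 z + ⋯ + a_{2k+1} z^{2k+1} + z^{2k+2}`. -/
noncomputable def gpCompanion (k : ℕ) : Matrix (Fin (2 * k + 2)) (Fin (2 * k + 2)) ℤ :=
  fun i j =>
    if (i : ℕ) = 2 * k + 1 then -(gpCharPoly k).coeff (j : ℕ)
    else if (j : ℕ) = (i : ℕ) + 1 then 1 else 0

/-!
Let `s` be the shift on `ℤ^n`. In block form the Laplacian of `GP(n,k)` is `[[A, -1], [-1, B]]` with
`A = 3 - s - s⁻¹` and `B = 3 - s ^ k - s ^ (-k)`, so its cokernel is that of `A B - 1`, which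
is `Q_k(s)` up to the unit `s ^ (k + 1)`. Now `s` acts as `X` on `ℤ[X] ⧸ (X ^ n - 1)`, and the
companion matrix `𝒜` of `Q_k` acts as `X` on `ℤ[X] ⧸ (Q_k)`. Hence `coker Q_k(s)` and
`coker (𝒜 ^ n - 1)` are both `ℤ[X] ⧸ (X ^ n - 1, Q_k)`.
-/

section CyclicVector

variable {R M : Type*} [CommRing R] [AddCommGroup M] [Module R M]

/-- The evaluation map `p ↦ p(T) m`; it is the `R[X]`-module map `R[X] → M` determined by `m` when
`X` acts on `M` as `T`, recorded here as an `R`-linear map. -/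
noncomputable def aevalApply (T : Module.End R M) (m : M) : R[X] →ₗ[R] M :=
  LinearMap.applyₗ m ∘ₗ (aeval T).toLinearMap

@[simp]
theorem aevalApply_apply (T : Module.End R M) (m : M) (p : R[X]) :
    aevalApply T m p = aeval T p m :=
  rfl

/-- The vector `m` is cyclic for `T` with annihilator `(g)`: the evaluation map `p ↦ p(T) m` is
onto and its kernel is the ideal generated by `g`. -/
structure IsCyclicVector (T : Module.End R M) (m : M) (g : R[X]) : Prop where
  surjective : Function.Surjective (aevalApply T m)
  ker_eq : LinearMap.ker (aevalApply T m) = (Ideal.span {g}).restrictScalars R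

namespace IsCyclicVector

-- A surjection `R[X] ⧸ (g) → M` between free modules of the same finite rank is bijective.
theorem of_surjective [Module.Free R M] [Module.Finite R M] {T : Module.End R M} {m : M}
    {g : R[X]} (hg : g.Monic) (hrank : g.natDegree ≤ Module.finrank R M)
    (hsurj : Function.Surjective (aevalApply T m)) (hgm : aeval T g m = 0) :
    IsCyclicVector T m g := by
  have hle : (Ideal.span {g}).restrictScalars R ≤ LinearMap.ker (aevalApply T m) := by
    intro p hp
    obtain ⟨q, rfl⟩ := Ideal.mem_span_singleton'.1 hp
    simp [hgm]
  have : Module.Free R (R[X] ⧸ Ideal.span {g}) := hg.free_adjoinRoot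
  have : Module.Finite R (R[X] ⧸ Ideal.span {g}) := hg.finite_adjoinRoot
  let e := Submodule.Quotient.restrictScalarsEquiv R (Ideal.span {g})
  let F := Submodule.liftQ _ _ hle ∘ₗ e.symm.toLinearMap
  have hF : Function.Bijective F := by
    refine OrzechProperty.bijective_of_surjective_of_finrank_le F (fun y ↦ ?_) ?_
    · obtain ⟨p, hp⟩ := hsurj y
      exact ⟨Submodule.Quotient.mk p, hp⟩
    · nontriviality R
      rwa [finrank_quotient_span_eq_natDegree' hg]
  refine ⟨hsurj, le_antisymm (fun p hp ↦ ?_) hle⟩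
  have hFp : F (Submodule.Quotient.mk p) = 0 := hp
  exact (Submodule.Quotient.mk_eq_zero _).1 (hF.1 (hFp.trans (map_zero F).symm))

variable {T : Module.End R M} {m : M} {g : R[X]}

theorem aeval_eq_zero_iff (h : IsCyclicVector T m g) (p : R[X]) :
    aeval T p m = 0 ↔ g ∣ p := by
  rw [← aevalApply_apply, ← LinearMap.mem_ker, h.ker_eq, Submodule.restrictScalars_mem,
    Ideal.mem_span_singleton]

theorem aeval_mem_range_iff (h : IsCyclicVector T m g) (p q : R[X]) :
    aeval T p m ∈ LinearMap.range (aeval T q) ↔ p ∈ Ideal.span {g, q} := by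
  rw [Ideal.mem_span_pair, LinearMap.mem_range, h.surjective.exists]
  have hsub (r : R[X]) : aeval T q (aevalApply T m r) = aeval T p m ↔ g ∣ p - r * q := by
    rw [← h.aeval_eq_zero_iff, map_sub, LinearMap.sub_apply, sub_eq_zero, mul_comm, map_mul,
      Module.End.mul_apply, aevalApply_apply, eq_comm]
  simp only [hsub, dvd_iff_exists_eq_mul_left]
  constructor
  · rintro ⟨r, s, hs⟩
    exact ⟨s, r, by rw [← hs, sub_add_cancel]⟩
  · rintro ⟨s, r, rfl⟩
    exact ⟨r, s, add_sub_cancel_right _ _⟩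

/-- `coker q(T)` for an operator `T` with cyclic vector is the quotient of `R[X]` by `(g, q)`. -/
noncomputable def cokerEquiv (h : IsCyclicVector T m g) (q : R[X]) :
    (M ⧸ LinearMap.range (aeval T q)) ≃ₗ[R] (R[X] ⧸ Ideal.span {g, q}) :=
  have hker : LinearMap.ker ((LinearMap.range (aeval T q)).mkQ ∘ₗ aevalApply T m) =
      (Ideal.span {g, q}).restrictScalars R := by
    ext p
    rw [LinearMap.mem_ker, LinearMap.comp_apply, Submodule.mkQ_apply,
      Submodule.Quotient.mk_eq_zero, aevalApply_apply, h.aeval_mem_range_iff,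
      Submodule.restrictScalars_mem]
  (LinearMap.quotKerEquivOfSurjective ((LinearMap.range (aeval T q)).mkQ ∘ₗ aevalApply T m)
      ((Submodule.mkQ_surjective _).comp h.surjective)).symm ≪≫ₗ
    Submodule.quotEquivOfEq _ _ hker ≪≫ₗ
    Submodule.Quotient.restrictScalarsEquiv R (Ideal.span {g, q})

/-- Reciprocity of cyclic vectors: with `T` and `U` acting as `X` on `R[X] ⧸ (g)` and `R[X] ⧸ (q)`,
both `coker q(T)` and `coker g(U)` are `R[X] ⧸ (g, q)`. -/
noncomputable def cokerEquivCoker {N : Type*} [AddCommGroup N] [Module R N] {U : Module.End R N}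
    {v : N} {q : R[X]} (hT : IsCyclicVector T m g) (hU : IsCyclicVector U v q) :
    (M ⧸ LinearMap.range (aeval T q)) ≃ₗ[R] (N ⧸ LinearMap.range (aeval U g)) :=
  have hspan : Ideal.span {g, q} = Ideal.span {q, g} := by rw [Set.pair_comm]
  hT.cokerEquiv q ≪≫ₗ (Ideal.quotientEquivAlgOfEq R hspan).toLinearEquiv ≪≫ₗ
    (hU.cokerEquiv g).symm

end IsCyclicVector

theorem surjective_of_single_mem_range {P ι : Type*} [AddCommGroup P] [Module R P] [Finite ι]
    [DecidableEq ι] {f : P →ₗ[R] ι → R} (h : ∀ i, Pi.single i 1 ∈ LinearMap.range f) :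
    Function.Surjective f := by
  rw [← LinearMap.range_eq_top, eq_top_iff, ← (Pi.basisFun R ι).span_eq, Submodule.span_le]
  rintro _ ⟨i, rfl⟩
  simpa using h i

end CyclicVector

section Companion

variable {R : Type*} [CommRing R]

theorem coeff_iterate_divX (p : R[X]) (i j : ℕ) : (divX^[i] p).coeff j = p.coeff (j + i) := by
  induction i generalizing j with
  | zero => rfl
  | succ i ih => rw [Function.iterate_succ_apply', coeff_divX, ih, add_right_comm, add_assoc]

theorem X_mul_iterate_succ_divX_add (p : R[X]) (i : ℕ) :
    X * divX^[i + 1] p + C (p.coeff i) = divX^[i] p := by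
  simpa only [Function.iterate_succ_apply', coeff_iterate_divX, zero_add] using
    X_mul_divX_add (divX^[i] p)

theorem iterate_divX_of_natDegree_eq {p : R[X]} {n : ℕ} (hp : p.Monic) (hn : p.natDegree = n) :
    divX^[n] p = 1 := by
  subst hn
  ext i
  rw [coeff_iterate_divX, coeff_one]
  rcases eq_or_ne i 0 with rfl | hi
  · rw [if_pos rfl, zero_add, hp.coeff_natDegree]
  · rw [if_neg hi, coeff_eq_zero_of_natDegree_lt (by omega)]

/-- The companion matrix of a monic polynomial of degree `d + 1`, with the negated coefficients
in the last row and ones on the superdiagonal. -/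
def companion (g : R[X]) (d : ℕ) : Matrix (Fin (d + 1)) (Fin (d + 1)) R :=
  fun i j ↦ if (i : ℕ) = d then -g.coeff j else if (j : ℕ) = i + 1 then 1 else 0

theorem companion_mulVec_single_zero (g : R[X]) (d : ℕ) :
    (companion g d).mulVec (Pi.single 0 1) = -g.coeff 0 • Pi.single (Fin.last d) 1 := by
  ext i
  simp only [Matrix.mulVec_single_one, Matrix.col_apply, companion, Pi.smul_apply,
    Pi.single_apply, Fin.ext_iff, Fin.val_last, smul_eq_mul]
  split_ifs <;> simp_all

theorem companion_mulVec_single_succ (g : R[X]) {d : ℕ} (j : Fin d) :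
    (companion g d).mulVec (Pi.single j.succ 1) =
      Pi.single j.castSucc 1 - g.coeff (j + 1) • Pi.single (Fin.last d) 1 := by
  ext i
  simp only [Matrix.mulVec_single_one, Matrix.col_apply, companion, Pi.sub_apply, Pi.smul_apply,
    Pi.single_apply, Fin.ext_iff, Fin.val_last, Fin.val_succ, Fin.val_castSucc, smul_eq_mul]
  grind

theorem mulVecLin_pow_sub_one {ι : Type*} [Fintype ι] [DecidableEq ι] (B : Matrix ι ι R) (n : ℕ) :
    (B ^ n - 1).mulVecLin = aeval B.mulVecLin (X ^ n - 1 : R[X]) := by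
  simp [← Matrix.toLin'_apply', map_sub, Matrix.toLin'_pow, Module.End.one_eq_id]

variable {g : R[X]} {d : ℕ}

-- The iterated quotients by `X` are the Horner polynomials of `g`, the basis of `R[X] ⧸ (g)` in
-- which multiplication by `X` has matrix `companion g d`.
theorem aeval_companion_iterate_divX (hg : g.Monic) (hd : g.natDegree = d + 1) (j : Fin (d + 1)) :
    aeval (companion g d).mulVecLin (divX^[j + 1] g) (Pi.single (Fin.last d) 1) =
      Pi.single j 1 := by
  induction j using Fin.reverseInduction with
  | last => rw [Fin.val_last, iterate_divX_of_natDegree_eq hg hd, map_one, Module.End.one_apply]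
  | cast j ih =>
    rw [Fin.val_succ] at ih
    rw [Fin.val_castSucc, ← X_mul_iterate_succ_divX_add, map_add, map_mul, aeval_X, aeval_C,
      LinearMap.add_apply, Module.End.mul_apply, ih, Matrix.mulVecLin_apply,
      companion_mulVec_single_succ, Module.algebraMap_end_apply, sub_add_cancel]

theorem aeval_companion_self (hg : g.Monic) (hd : g.natDegree = d + 1) :
    aeval (companion g d).mulVecLin g (Pi.single (Fin.last d) 1) = 0 := by
  have hdivX := aeval_companion_iterate_divX hg hd 0
  rw [Fin.val_zero, zero_add, Function.iterate_one] at hdivX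
  nth_rw 2 [← X_mul_divX_add g]
  rw [map_add, map_mul, aeval_X, aeval_C, LinearMap.add_apply, Module.End.mul_apply, hdivX,
    Matrix.mulVecLin_apply, companion_mulVec_single_zero, Module.algebraMap_end_apply, neg_smul,
    neg_add_cancel]

theorem isCyclicVector_companion (hg : g.Monic) (hd : g.natDegree = d + 1) :
    IsCyclicVector (companion g d).mulVecLin (Pi.single (Fin.last d) 1) g := by
  have : Nontrivial R := (subsingleton_or_nontrivial R).resolve_left fun _ ↦ by
    simp [natDegree_of_subsingleton] at hd
  exact .of_surjective hg (by simp [hd])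
    (surjective_of_single_mem_range fun j ↦ ⟨_, aeval_companion_iterate_divX hg hd j⟩)
    (aeval_companion_self hg hd)

end Companion

section Translation

variable (R : Type*) [CommRing R] {G : Type*} [AddGroup G]

/-- Translation of functions, `f ↦ f (· - a)`, as an invertible operator. -/
def translation (a : G) : (Module.End R (G → R))ˣ :=
  LinearMap.GeneralLinearGroup.ofLinearEquiv (LinearEquiv.funCongrLeft R R (Equiv.subRight a))

@[simp]
theorem translation_apply (a : G) (f : G → R) (i : G) :
    (translation R a : Module.End R (G → R)) f i = f (i - a) :=
  rfl

@[simp]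
theorem translation_inv_apply (a : G) (f : G → R) (i : G) :
    (↑(translation R a)⁻¹ : Module.End R (G → R)) f i = f (i + a) :=
  rfl

theorem translation_pow (a : G) (j : ℕ) : translation R a ^ j = translation R (j • a) := by
  induction j with
  | zero => ext f i; simp
  | succ j ih => ext f i; simp [pow_succ, ih, succ_nsmul', sub_add_eq_sub_sub_swap]

theorem isCyclicVector_translation_one [Nontrivial R] (n : ℕ) [NeZero n] :
    IsCyclicVector (translation R (1 : ZMod n) : Module.End R (ZMod n → R)) (Pi.single 0 1)
      (X ^ n - 1) := by
  refine .of_surjective (monic_X_pow_sub_C 1 (NeZero.ne n)) ?_ ?_ ?_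
  · rw [← C_1, natDegree_X_pow_sub_C, Module.finrank_fintype_fun_eq_card, ZMod.card]
  · refine surjective_of_single_mem_range fun i ↦ ⟨X ^ i.val, ?_⟩
    ext j
    rw [aevalApply_apply, aeval_X_pow, ← Units.val_pow_eq_pow_val, translation_pow]
    simp [Pi.single_apply, sub_eq_zero]
  · rw [map_sub, map_one, aeval_X_pow, ← Units.val_pow_eq_pow_val, translation_pow]
    ext i
    simp

end Translation

section SpokedCycle

variable {A : Type*} [Ring A]

/-- The Laplacian `2 - s - s⁻¹` of a cycle with rotation `s`, plus one for an extra edge leaving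
each vertex. -/
def spokedCycle (s : Aˣ) : A :=
  3 - s - ↑s⁻¹

theorem spokedCycle_mul_self (s : Aˣ) : spokedCycle s * s = -((s : A) ^ 2 - 3 * s + 1) := by
  rw [spokedCycle, sub_mul, sub_mul, Units.inv_mul]
  noncomm_ring

theorem commute_spokedCycle {s t : Aˣ} (h : Commute s t) : Commute (s : A) (spokedCycle t) :=
  have hval : Commute (s : A) t := h.units_val
  ((Commute.ofNat_right _ 3).sub_right hval).sub_right hval.units_inv_right

theorem spokedCycle_translation_apply {R G : Type*} [CommRing R] [AddGroup G] (a : G)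
    (f : G → R) (i : G) :
    spokedCycle (translation R a) f i = 3 * f i - f (i - a) - f (i + a) := by
  simp [spokedCycle, Module.End.ofNat_apply]

theorem gpCharPoly_eq_mul_sub (k : ℕ) :
    gpCharPoly k = (X ^ 2 - 3 * X + 1) * ((X ^ k) ^ 2 - 3 * X ^ k + 1) - X ^ (k + 1) := by
  rw [gpCharPoly]
  ring

theorem aeval_gpCharPoly (s : Aˣ) (k : ℕ) :
    aeval (s : A) (gpCharPoly k) =
      (spokedCycle s * spokedCycle (s ^ k) - 1) * (s ^ (k + 1) : Aˣ) := by
  have hquad (t : Aˣ) : (t : A) ^ 2 - 3 * t + 1 = -(spokedCycle t * t) := by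
    rw [spokedCycle_mul_self, neg_neg]
  have hcomm : (s : A) * spokedCycle (s ^ k) = spokedCycle (s ^ k) * s :=
    commute_spokedCycle (Commute.self_pow s k)
  calc aeval (s : A) (gpCharPoly k)
      = ((s : A) ^ 2 - 3 * s + 1) * (((s ^ k : Aˣ) : A) ^ 2 - 3 * (s ^ k : Aˣ) + 1)
          - (s ^ (k + 1) : Aˣ) := by
        simp [gpCharPoly_eq_mul_sub, map_ofNat (aeval (s : A)) 3]
    _ = spokedCycle s * (s * spokedCycle (s ^ k)) * (s ^ k : Aˣ) - (s ^ (k + 1) : Aˣ) := by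
        rw [hquad, hquad, neg_mul_neg]
        simp only [mul_assoc]
    _ = (spokedCycle s * spokedCycle (s ^ k) - 1) * (s ^ (k + 1) : Aˣ) := by
        rw [hcomm, pow_succ' s k, Units.val_mul]
        simp only [sub_mul, one_mul, mul_assoc]

theorem range_aeval_gpCharPoly {M : Type*} [AddCommGroup M] (s : (Module.End ℤ M)ˣ) (k : ℕ) :
    LinearMap.range (aeval (s : Module.End ℤ M) (gpCharPoly k)) =
      LinearMap.range (spokedCycle s * spokedCycle (s ^ k) - 1) := by
  rw [aeval_gpCharPoly, Module.End.mul_eq_comp, LinearMap.range_comp_of_range_eq_top]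
  exact LinearMap.range_eq_top.2 ((Module.End.isUnit_iff _).1 (Units.isUnit _)).surjective

theorem natDegree_gpCharPoly {k : ℕ} (hk : 1 ≤ k) : (gpCharPoly k).natDegree = 2 * k + 2 := by
  unfold gpCharPoly
  compute_degree <;> omega

theorem monic_gpCharPoly {k : ℕ} (hk : 1 ≤ k) : (gpCharPoly k).Monic := by
  refine monic_of_natDegree_le_of_coeff_eq_one (2 * k + 2) (natDegree_gpCharPoly hk).le ?_
  unfold gpCharPoly
  compute_degree <;> grind

end SpokedCycle

section BlockElimination

variable {R M N : Type*} [Ring R] [AddCommGroup M] [Module R M] [AddCommGroup N] [Module R N]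

/-- The block operator `[[A, -1], [-1, B]]`. -/
def negOneBlock (A : M →ₗ[R] N) (B : N →ₗ[R] M) : (M × N) →ₗ[R] (N × M) :=
  (A ∘ₗ LinearMap.fst R M N - LinearMap.snd R M N).prod
    (B ∘ₗ LinearMap.snd R M N - LinearMap.fst R M N)

-- Row reduction: `(u, v) ↦ u + A v` kills the first block column of `[[A, -1], [-1, B]]` and
-- turns the second into the Schur complement `A B - 1`.
theorem mem_range_negOneBlock_iff (A : M →ₗ[R] N) (B : N →ₗ[R] M) (w : N × M) :
    w ∈ LinearMap.range (negOneBlock A B) ↔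
      w.1 + A w.2 ∈ LinearMap.range (A ∘ₗ B - LinearMap.id) := by
  constructor
  · rintro ⟨⟨x, y⟩, rfl⟩
    exact ⟨y, by simp [negOneBlock]⟩
  · rintro ⟨y, hy⟩
    refine ⟨(B y - w.2, y), Prod.ext ?_ ?_⟩
    · have hy' : A (B y) - y = w.1 + A w.2 := hy
      simp [negOneBlock, sub_right_comm, hy']
    · simp [negOneBlock]

/-- Elimination of one block variable: `[[A, -1], [-1, B]]` and `A B - 1` have the same cokernel. -/
noncomputable def negOneBlockCokerEquiv (A : M →ₗ[R] N) (B : N →ₗ[R] M) :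
    ((N × M) ⧸ LinearMap.range (negOneBlock A B)) ≃ₗ[R]
      (N ⧸ LinearMap.range (A ∘ₗ B - LinearMap.id)) :=
  let reduce : N × M →ₗ[R] N := LinearMap.fst R N M + A ∘ₗ LinearMap.snd R N M
  let f := (LinearMap.range (A ∘ₗ B - LinearMap.id)).mkQ ∘ₗ reduce
  have hker : LinearMap.range (negOneBlock A B) = LinearMap.ker f := by
    ext w
    rw [mem_range_negOneBlock_iff, LinearMap.mem_ker, LinearMap.comp_apply, Submodule.mkQ_apply,
      Submodule.Quotient.mk_eq_zero]
    rfl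
  have hsurj : Function.Surjective f :=
    (Submodule.mkQ_surjective _).comp fun u ↦ ⟨(u, 0), by simp [reduce]⟩
  Submodule.quotEquivOfEq _ _ hker ≪≫ₗ LinearMap.quotKerEquivOfSurjective f hsurj

end BlockElimination

section GeneralizedPetersen

theorem lapMatrix_mulVec_apply_of_neighborFinset_eq {V R : Type*} [Fintype V] [DecidableEq V]
    [Ring R] {G : SimpleGraph V} [DecidableRel G.Adj] {v a b c : V}
    (hv : G.neighborFinset v = {a, b, c}) (hab : a ≠ b) (hac : a ≠ c) (hbc : b ≠ c) (f : V → R) :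
    (G.lapMatrix R).mulVec f v = 3 * f v - (f a + f b + f c) := by
  have hdeg : G.degree v = 3 := by
    rw [← SimpleGraph.card_neighborFinset_eq_degree, hv,
      Finset.card_eq_three.2 ⟨a, b, c, hab, hac, hbc, rfl⟩]
  rw [SimpleGraph.lapMatrix_mulVec_apply, hdeg, hv, Finset.sum_insert (by simp [hab, hac]),
    Finset.sum_pair hbc, add_assoc, Nat.cast_ofNat]

theorem zmod_natCast_ne_zero {n j : ℕ} (hj : 0 < j) (hjn : j < n) : (j : ZMod n) ≠ 0 :=
  (ZMod.natCast_eq_zero_iff j n).not.2 (Nat.not_dvd_of_pos_of_lt hj hjn)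

theorem zmod_add_natCast_ne_sub_natCast {n j : ℕ} (hj : 1 ≤ j) (hjn : 2 * j < n) (i : ZMod n) :
    i + j ≠ i - j := by
  have hne : ((2 * j : ℕ) : ZMod n) ≠ 0 := zmod_natCast_ne_zero (by omega) hjn
  contrapose hne
  push_cast
  linear_combination hne

variable {n k : ℕ} [NeZero n]

theorem neighborFinset_genPetersen_inl (h : (1 : ZMod n) ≠ 0) (i : ZMod n) :
    (genPetersen n k).neighborFinset (Sum.inl i) =
      {Sum.inl (i + 1), Sum.inl (i - 1), Sum.inr i} := by
  ext (j | j) <;> rw [SimpleGraph.mem_neighborFinset, genPetersen, SimpleGraph.fromRel_adj] <;>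
    grind [gpRel]

theorem neighborFinset_genPetersen_inr (h : (k : ZMod n) ≠ 0) (i : ZMod n) :
    (genPetersen n k).neighborFinset (Sum.inr i) =
      {Sum.inr (i + k), Sum.inr (i - k), Sum.inl i} := by
  ext (j | j) <;> rw [SimpleGraph.mem_neighborFinset, genPetersen, SimpleGraph.fromRel_adj] <;>
    grind [gpRel]

variable {R : Type*} [CommRing R]

theorem lapMatrix_genPetersen_mulVec_inl (hn : 3 ≤ n) (f : ZMod n ⊕ ZMod n → R) (i : ZMod n) :
    ((genPetersen n k).lapMatrix R).mulVec f (Sum.inl i) =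
      3 * f (Sum.inl i) - f (Sum.inl (i - 1)) - f (Sum.inl (i + 1)) - f (Sum.inr i) := by
  have hone : (1 : ZMod n) ≠ 0 := by
    simpa using zmod_natCast_ne_zero (n := n) one_pos (by omega)
  have hne : i + 1 ≠ i - 1 := by simpa using zmod_add_natCast_ne_sub_natCast le_rfl (by omega) i
  rw [lapMatrix_mulVec_apply_of_neighborFinset_eq (neighborFinset_genPetersen_inl hone i)
    (Sum.inl_injective.ne hne) Sum.inl_ne_inr Sum.inl_ne_inr]
  ring

theorem lapMatrix_genPetersen_mulVec_inr (hk : 1 ≤ k) (hkn : 2 * k < n)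
    (f : ZMod n ⊕ ZMod n → R) (i : ZMod n) :
    ((genPetersen n k).lapMatrix R).mulVec f (Sum.inr i) =
      3 * f (Sum.inr i) - f (Sum.inr (i - k)) - f (Sum.inr (i + k)) - f (Sum.inl i) := by
  rw [lapMatrix_mulVec_apply_of_neighborFinset_eq
    (neighborFinset_genPetersen_inr (zmod_natCast_ne_zero hk (by omega)) i)
    (Sum.inr_injective.ne (zmod_add_natCast_ne_sub_natCast hk hkn i)) Sum.inr_ne_inl Sum.inr_ne_inl]
  ring

variable (R)

theorem sumArrow_lapMatrix_genPetersen (hk : 1 ≤ k) (hkn : 2 * k < n) :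
    (LinearEquiv.sumArrowLequivProdArrow (ZMod n) (ZMod n) R R).toLinearMap ∘ₗ
        ((genPetersen n k).lapMatrix R).mulVecLin =
      negOneBlock (spokedCycle (translation R 1)) (spokedCycle (translation R 1 ^ k)) ∘ₗ
        (LinearEquiv.sumArrowLequivProdArrow (ZMod n) (ZMod n) R R).toLinearMap := by
  rw [translation_pow, nsmul_one]
  refine LinearMap.ext fun f ↦ Prod.ext (funext fun i ↦ ?_) (funext fun i ↦ ?_)
  · simp [negOneBlock, spokedCycle_translation_apply,
      lapMatrix_genPetersen_mulVec_inl (show 3 ≤ n by omega)]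
  · simp [negOneBlock, spokedCycle_translation_apply, lapMatrix_genPetersen_mulVec_inr hk hkn]

/-- The cokernel of the Laplacian of `GP(n,k)`, with one of the two rims eliminated: for the shift
`s` of `ZMod n`, it is `coker ((3 - s - s⁻¹) (3 - s ^ k - s ^ (-k)) - 1)`. -/
noncomputable def lapMatrixGenPetersenCokerEquiv (hk : 1 ≤ k) (hkn : 2 * k < n) :
    ((ZMod n ⊕ ZMod n → R) ⧸ LinearMap.range ((genPetersen n k).lapMatrix R).mulVecLin) ≃ₗ[R]
      ((ZMod n → R) ⧸ LinearMap.range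
        (spokedCycle (translation R (1 : ZMod n)) * spokedCycle (translation R 1 ^ k) - 1)) :=
  have hmap : (LinearMap.range ((genPetersen n k).lapMatrix R).mulVecLin).map
      (LinearEquiv.sumArrowLequivProdArrow (ZMod n) (ZMod n) R R).toLinearMap =
      LinearMap.range (negOneBlock (spokedCycle (translation R (1 : ZMod n)))
        (spokedCycle (translation R 1 ^ k))) := by
    rw [← LinearMap.range_comp, sumArrow_lapMatrix_genPetersen R hk hkn,
      LinearMap.range_comp_of_range_eq_top _ (LinearEquiv.range _)]
  Submodule.Quotient.equiv _ _ _ hmap ≪≫ₗ negOneBlockCokerEquiv _ _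

end GeneralizedPetersen

theorem coker_lap_iso (n k : ℕ) (hn : 3 ≤ n) (hk : 1 ≤ k) (hkn : 2 * k < n) :
    haveI : NeZero n := ⟨by omega⟩
    Nonempty (
      ((ZMod n ⊕ ZMod n → ℤ) ⧸
          LinearMap.range (Matrix.mulVecLin ((genPetersen n k).lapMatrix ℤ)))
        ≃+
      ((Fin (2 * k + 2) → ℤ) ⧸
          LinearMap.range (Matrix.mulVecLin (gpCompanion k ^ n - 1)))) := by
  have : NeZero n := ⟨by omega⟩
  have hshift := isCyclicVector_translation_one ℤ n
  have hcompanion : IsCyclicVector (gpCompanion k).mulVecLin _ (gpCharPoly k) :=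
    isCyclicVector_companion (monic_gpCharPoly hk) (natDegree_gpCharPoly hk)
  rw [mulVecLin_pow_sub_one]
  exact ⟨(lapMatrixGenPetersenCokerEquiv ℤ hk hkn ≪≫ₗ
    Submodule.quotEquivOfEq _ _ (range_aeval_gpCharPoly _ k).symm ≪≫ₗ
    hshift.cokerEquivCoker hcompanion).toAddEquiv⟩
end

section
/- Let n ≥ 3 and 1 ≤ k < n/2, let ε = exp(2πi/n) ∈ ℂ, and let P(z) = (3 − z − z^{−1})(3 − z^k − z^{−k}) − 1. Then n · τ(GP(n,k)) = ∏_{j=1}^{n−1} P(ε^j), as an equality in ℂ (with the natural number n·τ(GP(n,k)) cast to ℂ). -/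
open Polynomial

/-- The number of spanning trees of a graph `G`: the number of subgraphs that
contain all vertices and are trees. -/
noncomputable def numSpanningTrees {V : Type*} (G : SimpleGraph V) : ℕ :=
  Nat.card {H : G.Subgraph // H.IsSpanning ∧ H.coe.IsTree}

/-!
Order the vertices of `GP(n,k)` as outer followed by inner and let `s` be the indicator function of
the outer ones. Since the Laplacian `L` has zero row and column sums, `det (L + s sᵀ) = n² τ` by
Kirchhoff's theorem. The blocks of `L + s sᵀ` are circulant, the off-diagonal ones being `-1`, so
the determinant is that of a single Fourier multiplier on `ℤ/nℤ`. Its eigenvalue at `j ≠ 0` is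
`P(ε^j)`, while at `j = 0` the summand `s sᵀ` turns `P(1) = 0` into `n`.

For Kirchhoff's theorem, replace row `r` of `L` by a unit vector and expand the determinant along
the rows: row `v` is the sum over the neighbours `w` of `v` of the row for which `w` is the parent
of `v`. A choice of parents contributes `1` if following parents always leads to `r` (these choices
are the spanning trees) and `0` otherwise.
-/

section RootedFunctions

variable {V : Type*} {f g : V → V} {r : V} {G : SimpleGraph V}

/-- `f` is the parent function of a (possibly infinite) tree on `V` rooted at `r`; the root is its
own parent. -/
structure IsRootedAt (f : V → V) (r : V) : Prop where
  map_root : f r = r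
  exists_iterate_eq : ∀ v, ∃ m, f^[m] v = r

lemma IsRootedAt.exists_depth (hf : IsRootedAt f r) : ∃ d : V → ℕ, ∀ v ≠ r, d (f v) < d v := by
  classical
  refine ⟨fun v => Nat.find (hf.exists_iterate_eq v), fun v hv => ?_⟩
  obtain ⟨m, hm⟩ := Nat.exists_eq_succ_of_ne_zero
    (mt (Nat.find_eq_zero (hf.exists_iterate_eq v)).1 hv)
  have hreach : f^[m] (f v) = r := by
    simpa [hm] using Nat.find_spec (hf.exists_iterate_eq v)
  have hle := Nat.find_min' (hf.exists_iterate_eq (f v)) hreach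
  change Nat.find _ < Nat.find _
  lia

lemma IsRootedAt.of_depth (hr : f r = r) (d : V → ℕ) (hd : ∀ v ≠ r, d (f v) < d v) :
    IsRootedAt f r := by
  refine ⟨hr, fun v => ?_⟩
  induction h : d v using Nat.strong_induction_on generalizing v with
  | _ _ ih =>
    by_cases hv : v = r
    · exact ⟨0, hv⟩
    · obtain ⟨m, hm⟩ := ih _ (h ▸ hd v hv) (f v) rfl
      exact ⟨m + 1, hm⟩

lemma IsRootedAt.apply_ne (hf : IsRootedAt f r) {v : V} (hv : v ≠ r) : f v ≠ v := by
  obtain ⟨d, hd⟩ := hf.exists_depth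
  exact fun h => (hd v hv).ne (congrArg d h)

/-- The graph joining every `v` to `f v`; fixed points of `f` contribute no edge. -/
def functionGraph (f : V → V) : SimpleGraph V :=
  SimpleGraph.fromRel fun v w => f v = w

lemma IsRootedAt.functionGraph_adj_apply (hf : IsRootedAt f r) {v : V} (hv : v ≠ r) :
    (functionGraph f).Adj v (f v) :=
  ⟨(hf.apply_ne hv).symm, Or.inl rfl⟩

lemma IsRootedAt.functionGraph_le_iff (hf : IsRootedAt f r) :
    functionGraph f ≤ G ↔ ∀ v ≠ r, G.Adj v (f v) := by
  refine ⟨fun h v hv => h (hf.functionGraph_adj_apply hv), fun h v w hvw => ?_⟩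
  have adj_of_apply_eq {a b : V} (hab : a ≠ b) (hfa : f a = b) : G.Adj a b :=
    hfa ▸ h a fun ha => hab (by rw [← hfa, ha, hf.map_root])
  obtain ⟨hne, hfv | hfw⟩ := hvw
  exacts [adj_of_apply_eq hne hfv, (adj_of_apply_eq hne.symm hfw).symm]

lemma IsRootedAt.connected_functionGraph (hf : IsRootedAt f r) : (functionGraph f).Connected := by
  have reachable_iterate (v : V) (m : ℕ) : (functionGraph f).Reachable v (f^[m] v) := by
    induction m with
    | zero => rfl
    | succ m ih =>
      refine ih.trans ?_
      rw [Function.iterate_succ_apply']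
      by_cases h : f^[m] v = f (f^[m] v)
      · rw [← h]
      · exact SimpleGraph.Adj.reachable ⟨h, Or.inl rfl⟩
  have reachable_root (v : V) : (functionGraph f).Reachable v r := by
    obtain ⟨m, hm⟩ := hf.exists_iterate_eq v
    exact hm ▸ reachable_iterate v m
  have : Nonempty V := ⟨r⟩
  exact ⟨fun v w => (reachable_root v).trans (reachable_root w).symm⟩

-- The edge from `v` to `f v` is the only one leaving the set of descendants of `v`.
lemma IsRootedAt.adj_apply_of_connected (hf : IsRootedAt f r) (hG : G.Connected)
    (hle : G ≤ functionGraph f) {v : V} (hv : v ≠ r) : G.Adj v (f v) := by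
  have root_notMem : r ∉ {w | ∃ m, f^[m] w = v} := by
    rintro ⟨m, hm⟩
    exact hv (hm ▸ Function.iterate_fixed hf.map_root m)
  obtain ⟨p⟩ := hG v r
  obtain ⟨⟨⟨a, b⟩, hab⟩, -, ⟨m, ha⟩, hb⟩ :=
    p.exists_boundary_dart {w | ∃ m, f^[m] w = v} ⟨0, rfl⟩ root_notMem
  obtain ⟨-, hfa | hfb⟩ := hle hab
  · cases m with
    | zero => exact (ha : a = v) ▸ hfa ▸ hab
    | succ m => exact absurd ⟨m, hfa ▸ ha⟩ hb
  · exact absurd ⟨m + 1, (congrArg f^[m] hfb).trans ha⟩ hb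

lemma IsRootedAt.isTree_functionGraph (hf : IsRootedAt f r) : (functionGraph f).IsTree :=
  SimpleGraph.isTree_of_minimal_connected ⟨hf.connected_functionGraph, fun _ hG hle =>
    hf.functionGraph_le_iff.2 fun _ => hf.adj_apply_of_connected hG hle⟩

lemma IsRootedAt.eq_of_functionGraph_eq (hf : IsRootedAt f r) (hg : IsRootedAt g r)
    (h : functionGraph f = functionGraph g) : f = g := by
  obtain ⟨d, hd⟩ := hf.exists_depth
  funext v
  induction hdv : d v using Nat.strong_induction_on generalizing v with
  | _ _ ih =>
    by_cases hv : v = r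
    · rw [hv, hf.map_root, hg.map_root]
    have hadj : (functionGraph g).Adj v (f v) := h ▸ hf.functionGraph_adj_apply hv
    obtain ⟨-, hgv | hgfv⟩ := hadj
    · exact hgv.symm
    · have hffv : f (f v) = v := (ih _ (hdv ▸ hd v hv) (f v) rfl).trans hgfv
      have hfv : f v ≠ r := fun hfv => hv (by rw [← hffv, hfv, hf.map_root])
      have := hd v hv
      have := hd (f v) hfv
      rw [hffv] at this
      lia

lemma exists_isRootedAt_forall_adj (hG : G.Connected) (r : V) :
    ∃ f, IsRootedAt f r ∧ ∀ v ≠ r, G.Adj v (f v) := by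
  have exists_closer (v : V) (hv : v ≠ r) : ∃ w, G.Adj v w ∧ G.dist w r < G.dist v r := by
    obtain ⟨p, hp⟩ := hG.exists_walk_length_eq_dist v r
    cases p with
    | nil => exact absurd rfl hv
    | cons hvw q => exact ⟨_, hvw, hp ▸ Nat.lt_succ_of_le (SimpleGraph.dist_le q)⟩
  classical
  choose! f hadj hdist using exists_closer
  have update_of_ne {v : V} (hv : v ≠ r) : Function.update f r r v = f v :=
    Function.update_of_ne hv ..
  exact ⟨Function.update f r r,
    .of_depth (Function.update_self ..) (G.dist · r) fun v hv => update_of_ne hv ▸ hdist v hv,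
    fun v hv => update_of_ne hv ▸ hadj v hv⟩

lemma numSpanningTrees_eq_card_isTree_le (G : SimpleGraph V) :
    numSpanningTrees G = Nat.card {T : SimpleGraph V // T ≤ G ∧ T.IsTree} :=
  Nat.card_congr
    { toFun H := ⟨H.1.spanningCoe, H.1.spanningCoe_le,
        (H.1.spanningCoeEquivCoeOfSpanning H.2.1).isTree_iff.2 H.2.2⟩
      invFun T := ⟨SimpleGraph.toSubgraph T.1 T.2.1, SimpleGraph.toSubgraph.isSpanning _ _,
        (SimpleGraph.Subgraph.spanningCoeEquivCoeOfSpanning _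
          (SimpleGraph.toSubgraph.isSpanning T.1 T.2.1)).isTree_iff.1 T.2.2⟩
      left_inv H := Subtype.ext <|
        SimpleGraph.Subgraph.ext (SimpleGraph.Subgraph.isSpanning_iff.1 H.2.1).symm rfl
      right_inv _ := rfl }

lemma numSpanningTrees_eq_card_isRootedAt (G : SimpleGraph V) (r : V) :
    numSpanningTrees G = Nat.card {f : V → V // IsRootedAt f r ∧ ∀ v ≠ r, G.Adj v (f v)} := by
  rw [numSpanningTrees_eq_card_isTree_le]
  symm
  refine Nat.card_congr <| Equiv.ofBijective (fun f => ⟨functionGraph f.1,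
    f.2.1.functionGraph_le_iff.2 f.2.2, f.2.1.isTree_functionGraph⟩) ⟨fun f g hfg => ?_, ?_⟩
  · exact Subtype.ext (f.2.1.eq_of_functionGraph_eq g.2.1 (congrArg Subtype.val hfg))
  · rintro ⟨T, hTG, hT⟩
    obtain ⟨f, hf, hadj⟩ := exists_isRootedAt_forall_adj hT.connected r
    have hle : functionGraph f ≤ T := hf.functionGraph_le_iff.2 hadj
    have heq : functionGraph f = T := hle.antisymm <|
      (SimpleGraph.isTree_iff_minimal_connected.1 hT).2 hf.connected_functionGraph hle
    exact ⟨⟨f, hf, fun v hv => hTG (hadj v hv)⟩, Subtype.ext heq⟩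

end RootedFunctions

section MatrixTree

open Matrix

variable {V R : Type*} [Fintype V] [DecidableEq V] [CommRing R]

/-- Row `v` of the matrix of a rooted tree in which `w` is the parent of `v`. The root `r` has no
parent, so that the value of `w` is irrelevant for `v = r`. -/
def parentRow (R : Type*) [CommRing R] (r v w : V) : V → R :=
  if v = r then Pi.single r 1 else Pi.single v 1 - Pi.single w 1

/-- The matrix of `x ↦ x - x ∘ f`, except that row `r` is that of `x ↦ x`. -/
def parentMatrix (R : Type*) [CommRing R] (f : V → V) (r : V) : Matrix V V R :=
  fun v => parentRow R r v (f v)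

lemma parentMatrix_mulVec_apply (f : V → V) (r : V) (x : V → R) (v : V) :
    (parentMatrix R f r *ᵥ x) v = if v = r then x r else x v - x (f v) := by
  simp only [mulVec, parentMatrix, parentRow]
  split_ifs
  · rw [single_one_dotProduct]
  · rw [sub_dotProduct, single_one_dotProduct, single_one_dotProduct]

lemma IsRootedAt.det_parentMatrix {f : V → V} {r : V} (hf : IsRootedAt f r) :
    (parentMatrix R f r).det = 1 := by
  obtain ⟨d, hd⟩ := hf.exists_depth
  have apply_eq_one {v w : V} (hvw : d v ≤ d w) :
      parentMatrix R f r v w = (1 : Matrix V V R) v w := by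
    by_cases hv : v = r
    · simp [parentMatrix, parentRow, hv, one_apply, Pi.single_apply, eq_comm]
    · have hw : f v ≠ w := by
        rintro rfl
        exact (hd v hv).not_ge hvw
      simp [parentMatrix, parentRow, hv, one_apply, Pi.single_apply, hw.symm, eq_comm]
  have htri : (parentMatrix R f r).BlockTriangular (OrderDual.toDual ∘ d) := by
    intro v w hvw
    have hlt : d v < d w := hvw
    rw [apply_eq_one hlt.le, one_apply_ne fun h => hlt.ne (congrArg d h)]
  rw [htri.det]
  refine Finset.prod_eq_one fun a _ => ?_
  suffices h : (parentMatrix R f r).toSquareBlock (OrderDual.toDual ∘ d) a = 1 by rw [h, det_one]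
  ext ⟨v, hv⟩ ⟨w, hw⟩
  have hdvw : d v = d w := OrderDual.toDual.injective (hv.trans hw.symm)
  simp [toSquareBlock_def, apply_eq_one hdvw.le, one_apply]

-- The indicator function of the vertices from which `r` is never reached lies in the kernel.
lemma det_parentMatrix_eq_zero {f : V → V} {r : V} (hr : f r = r) (hf : ¬ IsRootedAt f r) :
    (parentMatrix R f r).det = 0 := by
  classical
  obtain ⟨v₀, hv₀⟩ : ∃ v, ∀ m, f^[m] v ≠ r := by
    by_contra! h
    exact hf ⟨hr, h⟩
  have never_reaches_apply_iff {v : V} (hv : v ≠ r) :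
      (∀ m, f^[m] (f v) ≠ r) ↔ ∀ m, f^[m] v ≠ r :=
    ⟨fun h m => m.casesOn hv h, fun h m => h (m + 1)⟩
  refine det_eq_zero_of_mulVec_eq_zero_of_mem_nonZeroDivisors
    (v := fun v => if ∀ m, f^[m] v ≠ r then 1 else 0) (i := v₀) ?_ (by simp [hv₀])
  funext v
  rw [parentMatrix_mulVec_apply, Pi.zero_apply]
  by_cases hv : v = r
  · rw [if_pos hv]
    exact if_neg fun h => h 0 rfl
  · rw [if_neg hv]
    simp only [never_reaches_apply_iff hv, sub_self]

open Classical in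
lemma det_parentMatrix {f : V → V} {r : V} (hr : f r = r) :
    (parentMatrix R f r).det = if IsRootedAt f r then 1 else 0 := by
  split_ifs with hf
  exacts [hf.det_parentMatrix, det_parentMatrix_eq_zero hr hf]

variable (G : SimpleGraph V) [DecidableRel G.Adj]

lemma lapMatrix_row (v : V) :
    G.lapMatrix R v = ∑ w ∈ G.neighborFinset v, (Pi.single v 1 - Pi.single w 1) := by
  funext w
  simp [SimpleGraph.lapMatrix, SimpleGraph.degMatrix, diagonal_apply, Pi.single_apply, eq_comm]

/-- The values allowed at `v` for the parent function of a spanning tree of `G` rooted at `r`. -/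
def parentCandidates (r v : V) : Finset V :=
  if v = r then {r} else G.neighborFinset v

lemma mem_piFinset_parentCandidates {r : V} {f : V → V} :
    f ∈ Fintype.piFinset (parentCandidates G r) ↔ f r = r ∧ ∀ v ≠ r, G.Adj v (f v) := by
  rw [Fintype.mem_piFinset]
  refine ⟨fun h => ⟨by simpa [parentCandidates] using h r, fun v hv => ?_⟩, fun h v => ?_⟩
  · simpa [parentCandidates, hv] using h v
  · by_cases hv : v = r
    · simp [parentCandidates, hv, h.1]
    · simpa [parentCandidates, hv] using h.2 v hv

-- Multilinearity of the determinant in the rows, row `v` of the Laplacian being a sum over the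
-- neighbours of `v`.
lemma det_updateRow_lapMatrix_single (r : V) :
    ((G.lapMatrix R).updateRow r (Pi.single r 1)).det =
      ∑ f ∈ Fintype.piFinset (parentCandidates G r), (parentMatrix R f r).det := by
  have hrows : (G.lapMatrix R).updateRow r (Pi.single r 1) =
      fun v => ∑ w ∈ parentCandidates G r v, parentRow R r v w := by
    funext v
    by_cases hv : v = r
    · subst hv
      simp [parentCandidates, parentRow]
    · rw [updateRow_ne hv, lapMatrix_row]
      simp [parentCandidates, parentRow, hv]
  rw [hrows]
  exact (detRowAlternating (n := V) (R := R)).toMultilinearMap.map_sum_finset (parentRow R r) _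

lemma adjugate_lapMatrix_self (r : V) :
    (G.lapMatrix R).adjugate r r = numSpanningTrees G := by
  classical
  calc (G.lapMatrix R).adjugate r r
      = ∑ f ∈ Fintype.piFinset (parentCandidates G r), (parentMatrix R f r).det := by
        rw [adjugate_apply, det_updateRow_lapMatrix_single]
    _ = ∑ f ∈ Fintype.piFinset (parentCandidates G r), if IsRootedAt f r then 1 else 0 :=
        Finset.sum_congr rfl fun f hf =>
          det_parentMatrix ((mem_piFinset_parentCandidates G).1 hf).1
    _ = Nat.card {f : V → V // IsRootedAt f r ∧ ∀ v ≠ r, G.Adj v (f v)} := by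
        rw [Finset.sum_boole, Nat.card_eq_fintype_card, Fintype.card_subtype]
        congr 2
        ext f
        simp only [Finset.mem_filter, mem_piFinset_parentCandidates, Finset.mem_univ, true_and]
        exact ⟨fun h => ⟨h.2, h.1.2⟩, fun h => ⟨⟨h.1.map_root, h.2⟩, h.1⟩⟩
    _ = numSpanningTrees G := by rw [← numSpanningTrees_eq_card_isRootedAt]

lemma det_updateRow_lapMatrix (r : V) (t : V → R) :
    ((G.lapMatrix R).updateRow r t).det = (∑ v, t v) * numSpanningTrees G := by
  set M := (G.lapMatrix R).updateRow r t
  have hadj : M.adjugate r r = numSpanningTrees G := by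
    rw [adjugate_apply, updateRow_idem, ← adjugate_apply, adjugate_lapMatrix_self]
  have hone : M *ᵥ (fun _ => 1) = Pi.single r (∑ v, t v) := by
    funext v
    by_cases hv : v = r
    · simp [M, hv, mulVec, dotProduct]
    · simpa [M, hv, mulVec] using congrFun (G.lapMatrix_mulVec_const_eq_zero (R := R)) v
  calc M.det = (M.adjugate *ᵥ (M *ᵥ fun _ => 1)) r := by
        rw [mulVec_mulVec, adjugate_mul, smul_mulVec, one_mulVec]; simp
    _ = (∑ v, t v) * numSpanningTrees G := by
        rw [hone, mulVec_single, ← hadj]; simp [mul_comm]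

/-- Adding all rows of `L + s tᵀ` to a row `r` turns it into `(∑ s) t`, because the columns of the
Laplacian `L` sum to zero; subtracting multiples of `t` from the other rows leaves `L` there. -/
theorem det_lapMatrix_add_vecMulVec [Nonempty V] (s t : V → R) :
    (G.lapMatrix R + vecMulVec s t).det = (∑ v, s v) * (∑ v, t v) * numSpanningTrees G := by
  set M := G.lapMatrix R + vecMulVec s t
  let r : V := Classical.arbitrary V
  have hrow : ∑ v, (1 : R) • M v = (∑ v, s v) • t := by
    have hL : (fun _ => 1) ᵥ* G.lapMatrix R = 0 := by
      rw [← mulVec_transpose, (G.isSymm_lapMatrix (R := R)).eq, G.lapMatrix_mulVec_const_eq_zero]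
    rw [← vecMul_eq_sum (fun _ => 1) M, vecMul_add, hL, zero_add, vecMul_vecMulVec]
    simp [dotProduct]
  calc M.det = (M.updateRow r ((∑ v, s v) • t)).det := by
        rw [← hrow, det_updateRow_sum, one_smul]
    _ = (∑ v, s v) * (M.updateRow r t).det := det_updateRow_smul ..
    _ = (∑ v, s v) * ((G.lapMatrix R).updateRow r t).det := by
        congr 1
        refine det_eq_of_forall_row_eq_smul_add_const (Function.update s r 0) r (by simp) ?_
        intro v w
        by_cases hv : v = r
        · simp [hv]
        · simp [M, hv, vecMulVec_apply]
    _ = (∑ v, s v) * (∑ v, t v) * numSpanningTrees G := by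
        rw [det_updateRow_lapMatrix, mul_assoc]

end MatrixTree

section BlockAndCirculant

open Matrix ZMod

lemma det_fromBlocks_neg_one₂₁ {m R : Type*} [Fintype m] [DecidableEq m] [CommRing R]
    (A B D : Matrix m m R) : (fromBlocks A B (-1) D).det = (A * D + B).det := by
  have hshear : fromBlocks 1 (A - 1) 0 1 * fromBlocks A B (-1) D =
      fromBlocks 1 (B + (A - 1) * D) (-1) D := by
    simp [fromBlocks_multiply]
  have hdet := congrArg det hshear
  rw [det_mul, det_fromBlocks_zero₂₁, det_fromBlocks_one₁₁] at hdet
  simp only [det_one, one_mul] at hdet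
  rw [hdet]
  congr 1
  noncomm_ring

variable {n : ℕ} [NeZero n]

lemma dft_circulant_mulVec (c x : ZMod n → ℂ) : 𝓕 (circulant c *ᵥ x) = 𝓕 c * 𝓕 x := by
  funext j
  simp only [dft_apply, mulVec, dotProduct, circulant_apply, Pi.mul_apply, smul_eq_mul,
    Finset.mul_sum]
  rw [Finset.sum_comm]
  refine Finset.sum_congr rfl fun l _ => ?_
  rw [← Equiv.sum_comp (Equiv.addRight l), Finset.sum_mul]
  refine Finset.sum_congr rfl fun i _ => ?_
  rw [Equiv.coe_addRight, add_sub_cancel_right, add_mul, neg_add, AddChar.map_add_eq_mul]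
  ring

lemma det_eq_prod_of_dft_mulVec {M : Matrix (ZMod n) (ZMod n) ℂ} {μ : ZMod n → ℂ}
    (hM : ∀ x, 𝓕 (M *ᵥ x) = μ * 𝓕 x) : M.det = ∏ j, μ j := by
  have hconj : (dft.toLinearMap ∘ₗ toLin' M ∘ₗ dft.symm.toLinearMap : (ZMod n → ℂ) →ₗ[ℂ] _) =
      toLin' (diagonal μ) := by
    refine LinearMap.ext fun x => ?_
    funext j
    simp [hM, mulVec_diagonal]
  rw [← det_diagonal, ← LinearMap.det_toLin' M, ← LinearMap.det_toLin', ← hconj,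
    LinearMap.det_conj]

lemma dft_single (i j : ZMod n) (z : ℂ) : 𝓕 (Pi.single i z) j = stdAddChar (-(i * j)) * z := by
  simp [dft_apply, Pi.single_apply]

lemma dft_one (j : ZMod n) : 𝓕 (1 : ZMod n → ℂ) j = if j = 0 then (n : ℂ) else 0 := by
  simpa [dft_apply] using AddChar.sum_mulShift (-j) (isPrimitive_stdAddChar n)

lemma det_fromBlocks_circulant (a b : ZMod n → ℂ) :
    (fromBlocks (circulant a) (-1) (-1) (circulant b)).det = ∏ j, (𝓕 a j * 𝓕 b j - 1) := by
  rw [det_fromBlocks_neg_one₂₁]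
  refine det_eq_prod_of_dft_mulVec fun x => ?_
  rw [add_mulVec, ← mulVec_mulVec, neg_mulVec, one_mulVec, map_add, map_neg,
    dft_circulant_mulVec, dft_circulant_mulVec]
  funext j
  simp only [Pi.add_apply, Pi.neg_apply, Pi.mul_apply]
  ring

/-- The convolution kernel of `3 - T - T⁻¹` on functions on `ZMod n`, where `T` is translation by
`c`. -/
def cubicKernel (R : Type*) [Ring R] (c : ZMod n) : ZMod n → R :=
  Pi.single 0 3 - (Pi.single c 1 + Pi.single (-c) 1)

lemma dft_cubicKernel (c j : ZMod n) :
    𝓕 (cubicKernel ℂ c) j = 3 - stdAddChar (c * j) - stdAddChar (-(c * j)) := by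
  rw [cubicKernel, map_sub, map_add, Pi.sub_apply, Pi.add_apply, dft_single, dft_single, dft_single]
  simp only [zero_mul, neg_zero, AddChar.map_zero_eq_one, one_mul, mul_one, neg_mul, neg_neg]
  ring

end BlockAndCirculant

section GeneralizedPetersen

open Matrix ZMod

variable {n k : ℕ}

lemma ne_and_eq_add_or_eq_add_iff {A : Type*} [AddCommGroup A] {c : A} (hc : c ≠ 0) (i j : A) :
    i ≠ j ∧ (j = i + c ∨ i = j + c) ↔ i - j = c ∨ i - j = -c := by
  have hsub : i - j = -c ↔ j = i + c := by grind
  have hadd : i - j = c ↔ i = j + c := by grind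
  rw [hsub, hadd, or_comm]
  refine and_iff_right_of_imp ?_
  rintro (rfl | rfl) <;> simpa using hc

lemma ite_eq_or_eq_neg {A R : Type*} [AddGroup A] [DecidableEq A] [AddMonoidWithOne R] {c : A}
    (hc : c ≠ -c) (x : A) :
    (if x = c ∨ x = -c then 1 else 0 : R) = (Pi.single c 1 + Pi.single (-c) 1 : A → R) x := by
  by_cases h : x = c
  · simp [h, hc]
  · simp [h, Pi.single_apply]

lemma genPetersen_adj_inl_inl (hone : (1 : ZMod n) ≠ 0) {i j : ZMod n} :
    (genPetersen n k).Adj (Sum.inl i) (Sum.inl j) ↔ i - j = 1 ∨ i - j = -1 := by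
  simp [genPetersen, gpRel, ← ne_and_eq_add_or_eq_add_iff hone]

lemma genPetersen_adj_inl_inr {i j : ZMod n} :
    (genPetersen n k).Adj (Sum.inl i) (Sum.inr j) ↔ i = j := by
  simp [genPetersen, gpRel, eq_comm]

lemma genPetersen_adj_inr_inr (hk : (k : ZMod n) ≠ 0) {i j : ZMod n} :
    (genPetersen n k).Adj (Sum.inr i) (Sum.inr j) ↔ i - j = k ∨ i - j = -k := by
  simp [genPetersen, gpRel, ← ne_and_eq_add_or_eq_add_iff hk]

lemma adjMatrix_genPetersen (R : Type*) [Ring R] (hk : (k : ZMod n) ≠ -k) :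
    (genPetersen n k).adjMatrix R =
      fromBlocks (circulant (Pi.single 1 1 + Pi.single (-1) 1)) 1 1
        (circulant (Pi.single (k : ZMod n) 1 + Pi.single (-(k : ZMod n)) 1)) := by
  have hk0 : (k : ZMod n) ≠ 0 := fun h => hk (by simp [h])
  have hone : (1 : ZMod n) ≠ -1 := fun h => hk (by simpa using congrArg ((k : ZMod n) * ·) h)
  have hone0 : (1 : ZMod n) ≠ 0 := fun h => hone (by simp [h])
  ext (i | i) (j | j)
  · simp [SimpleGraph.adjMatrix_apply, genPetersen_adj_inl_inl hone0, ite_eq_or_eq_neg hone]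
  · simp [SimpleGraph.adjMatrix_apply, genPetersen_adj_inl_inr, one_apply]
  · simp [SimpleGraph.adjMatrix_apply, SimpleGraph.adj_comm, genPetersen_adj_inl_inr, one_apply,
      eq_comm]
  · simp [SimpleGraph.adjMatrix_apply, genPetersen_adj_inr_inr hk0, ite_eq_or_eq_neg hk]

lemma circulant_mulVec_one {A R : Type*} [AddCommGroup A] [Fintype A] [NonAssocSemiring R]
    (c : A → R) : circulant c *ᵥ 1 = fun _ => ∑ i, c i := by
  funext i
  simpa [mulVec, dotProduct] using (Equiv.subLeft i).sum_comp c

variable [NeZero n]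

lemma degree_genPetersen (hk : (k : ZMod n) ≠ -k) (v : ZMod n ⊕ ZMod n) :
    (genPetersen n k).degree v = 3 := by
  have hrow : ((genPetersen n k).adjMatrix ℤ *ᵥ Sum.elim 1 1) v = 3 := by
    rw [adjMatrix_genPetersen ℤ hk, fromBlocks_mulVec]
    rcases v with i | i <;> simp [circulant_mulVec_one, Finset.sum_add_distrib]
  have hconst : Function.const _ 1 = (Sum.elim 1 1 : ZMod n ⊕ ZMod n → ℤ) := by simp
  have hdeg := (genPetersen n k).adjMatrix_mulVec_const_apply (a := (1 : ℤ)) (v := v)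
  rw [hconst, hrow, mul_one] at hdeg
  exact_mod_cast hdeg.symm

lemma lapMatrix_genPetersen (R : Type*) [Ring R] (hk : (k : ZMod n) ≠ -k) :
    (genPetersen n k).lapMatrix R =
      fromBlocks (circulant (cubicKernel R 1)) (-1) (-1)
        (circulant (cubicKernel R (k : ZMod n))) := by
  have hdeg : (genPetersen n k).degMatrix R =
      fromBlocks (circulant (Pi.single 0 3)) 0 0 (circulant (Pi.single 0 3)) := by
    simp only [circulant_single, SimpleGraph.degMatrix, degree_genPetersen hk]
    ext (i | i) (j | j) <;> simp [scalar_apply, diagonal_apply]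
  rw [SimpleGraph.lapMatrix, hdeg, adjMatrix_genPetersen R hk, sub_eq_add_neg, fromBlocks_neg,
    fromBlocks_add]
  simp only [cubicKernel, circulant_sub, ← sub_eq_add_neg, zero_sub]

lemma lapMatrix_genPetersen_add_vecMulVec (R : Type*) [Ring R] (hk : (k : ZMod n) ≠ -k) :
    (genPetersen n k).lapMatrix R + vecMulVec (Sum.elim 1 0) (Sum.elim 1 0) =
      fromBlocks (circulant (cubicKernel R 1 + 1)) (-1) (-1)
        (circulant (cubicKernel R (k : ZMod n))) := by
  have hblocks : vecMulVec (Sum.elim 1 0) (Sum.elim 1 0) =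
      (fromBlocks (circulant 1) 0 0 0 : Matrix (ZMod n ⊕ ZMod n) (ZMod n ⊕ ZMod n) R) := by
    ext (i | i) (j | j) <;> simp [vecMulVec_apply]
  rw [lapMatrix_genPetersen R hk, hblocks, fromBlocks_add, ← circulant_add, add_zero, add_zero]

theorem natCast_mul_numSpanningTrees_genPetersen (hk : (k : ZMod n) ≠ -k) :
    ((n * numSpanningTrees (genPetersen n k) : ℕ) : ℂ) =
      ∏ j ∈ Finset.univ.erase (0 : ZMod n),
        ((3 - stdAddChar j - stdAddChar (-j)) *
          (3 - stdAddChar ((k : ZMod n) * j) - stdAddChar (-((k : ZMod n) * j))) - 1) := by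
  have hn : (n : ℂ) ≠ 0 := Nat.cast_ne_zero.2 (NeZero.ne n)
  have hsum : ∑ v, (Sum.elim 1 0 : ZMod n ⊕ ZMod n → ℂ) v = n := by
    simp [Fintype.sum_sum_type]
  have hfactor :
      𝓕 (cubicKernel ℂ (1 : ZMod n) + 1) 0 * 𝓕 (cubicKernel ℂ (k : ZMod n)) 0 - 1 = n := by
    rw [map_add, Pi.add_apply, dft_cubicKernel, dft_cubicKernel, dft_one, if_pos rfl]
    simp only [mul_zero, neg_zero, AddChar.map_zero_eq_one]
    ring
  refine mul_left_cancel₀ hn ?_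
  calc (n : ℂ) * ((n * numSpanningTrees (genPetersen n k) : ℕ) : ℂ)
      = ((genPetersen n k).lapMatrix ℂ + vecMulVec (Sum.elim 1 0) (Sum.elim 1 0)).det := by
        rw [det_lapMatrix_add_vecMulVec, hsum, Nat.cast_mul, mul_assoc]
    _ = ∏ j, (𝓕 (cubicKernel ℂ (1 : ZMod n) + 1) j * 𝓕 (cubicKernel ℂ (k : ZMod n)) j - 1) := by
        rw [lapMatrix_genPetersen_add_vecMulVec ℂ hk, det_fromBlocks_circulant]
    _ = _ := by
        rw [← Finset.mul_prod_erase _ _ (Finset.mem_univ 0), hfactor]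
        congr 1
        refine Finset.prod_congr rfl fun j hj => ?_
        rw [map_add, Pi.add_apply, dft_cubicKernel, dft_cubicKernel, dft_one,
          if_neg (Finset.ne_of_mem_erase hj), one_mul, add_zero]

end GeneralizedPetersen

section RootsOfUnity

variable {n : ℕ} [NeZero n]

lemma prod_Ico_one_natCast_zmod {M : Type*} [CommMonoid M] (f : ZMod n → M) :
    ∏ j ∈ Finset.Ico 1 n, f j = ∏ j ∈ Finset.univ.erase 0, f j := by
  refine Finset.prod_nbij' (fun j => (j : ZMod n)) ZMod.val (fun j hj => ?_) (fun j hj => ?_)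
    (fun j hj => ?_) (fun j _ => ZMod.natCast_zmod_val j) fun _ _ => rfl
  · obtain ⟨hj₁, hjn⟩ := Finset.mem_Ico.1 hj
    refine Finset.mem_erase.2 ⟨fun h => ?_, Finset.mem_univ _⟩
    exact Nat.not_dvd_of_pos_of_lt hj₁ hjn ((ZMod.natCast_eq_zero_iff j n).1 h)
  · exact Finset.mem_Ico.2
      ⟨Nat.pos_of_ne_zero ((ZMod.val_ne_zero j).2 (Finset.ne_of_mem_erase hj)), ZMod.val_lt j⟩
  · exact ZMod.val_natCast_of_lt (Finset.mem_Ico.1 hj).2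

open Complex in
lemma exp_two_pi_I_div_zpow (m : ℤ) :
    exp (2 * Real.pi * I / n) ^ m = ZMod.stdAddChar (m : ZMod n) := by
  rw [ZMod.stdAddChar_coe, ← exp_int_mul]
  congr 1
  ring

end RootsOfUnity

open Complex in
theorem spanning_tree_count_prod_general (n k : ℕ) (hn : n ≠ 0) (hk : ¬ n ∣ 2 * k) :
    ((n * numSpanningTrees (genPetersen n k) : ℕ) : ℂ) =
      ∏ j ∈ Finset.Ico 1 n,
        ((3 - Complex.exp (2 * Real.pi * I / n) ^ (j : ℤ)
            - Complex.exp (2 * Real.pi * I / n) ^ (-(j : ℤ))) *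
         (3 - Complex.exp (2 * Real.pi * I / n) ^ ((j : ℤ) * k)
            - Complex.exp (2 * Real.pi * I / n) ^ (-((j : ℤ) * k))) - 1) := by
  have : NeZero n := ⟨hn⟩
  have hneg : (k : ZMod n) ≠ -k := by
    rwa [Ne, eq_neg_iff_add_eq_zero, ← two_mul, ← Nat.cast_two, ← Nat.cast_mul,
      ZMod.natCast_eq_zero_iff]
  rw [natCast_mul_numSpanningTrees_genPetersen hneg, ← prod_Ico_one_natCast_zmod]
  refine Finset.prod_congr rfl fun j _ => ?_
  simp only [exp_two_pi_I_div_zpow]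
  push_cast
  rw [mul_comm (k : ZMod n)]

open Complex in
/-- `n·τ(GP(n,k)) = ∏_{j=1}^{n−1} P(ε^j)` where
`P(z) = (3 − z − z⁻¹)(3 − z^k − z^{−k}) − 1` and `ε = exp(2πi/n)`. -/
theorem spanning_tree_count_prod (n k : ℕ) (hn : 3 ≤ n) (hk : 1 ≤ k) (hkn : 2 * k < n) :
    ((n * numSpanningTrees (genPetersen n k) : ℕ) : ℂ) =
      ∏ j ∈ Finset.Ico 1 n,
        ((3 - Complex.exp (2 * Real.pi * I / n) ^ (j : ℤ)
            - Complex.exp (2 * Real.pi * I / n) ^ (-(j : ℤ))) *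
         (3 - Complex.exp (2 * Real.pi * I / n) ^ ((j : ℤ) * k)
            - Complex.exp (2 * Real.pi * I / n) ^ (-((j : ℤ) * k))) - 1) := by
  refine spanning_tree_count_prod_general n k (by omega) fun h => ?_
  exact absurd (Nat.le_of_dvd (by omega) h) (by omega)
end

section
/- For every integer n ≥ 3, the number of spanning trees of the prism graph GP(n,1) is τ(GP(n,1)) = n·(T_n(2) − 1), where T_n(2) is the integer value of the n-th Chebyshev polynomial of the first kind at 2. -/
open Polynomial

/-!
Let `L` be the Laplacian of a graph `G` with `n` vertices and `τ(G)` its number of spanning trees.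
Orienting a spanning tree towards a root `r` turns it into a parent map. Replacing row `r` of `L`
by a unit vector and expanding the determinant over a choice of neighbour for every other vertex,
a choice contributes `1` if it is a parent map and `0` if it has a cycle. This gives the
matrix-tree theorem, which for the all-ones matrix `J` reads `det (L + t J) = t n² τ(G)`.

The prism over `G` is two copies of `G` joined by a perfect matching, so the block matrix of its
Laplacian plus `J` has determinant `det (L + 2 J) * det (L + 2)`. Hence
`2 τ(prism G) = τ(G) det (L + 2)`.

For the `n`-cycle the characters of `ℤ/nℤ` diagonalise `L`, with eigenvalues `2 - ξ - ξ⁻¹` for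
`ξ ^ n = 1`. The nonzero ones have product `n²`, so `τ(Cₙ) = n`. Writing `x = cos φ` and
`u = exp (i φ)`, `2 x - ξ - ξ⁻¹ = (u - ξ) (1 - ξ⁻¹ u⁻¹)` and therefore
`∏ (2 x - ξ - ξ⁻¹) = uⁿ + u⁻ⁿ - 2 = 2 (Tₙ(x) - 1)`, which is used at `x = 2`.
-/

open Matrix

namespace SpanningTrees

section Determinant

variable {m R : Type*} [Fintype m] [DecidableEq m] [CommRing R]

theorem det_eq_zero_of_mulVec_eq_zero {A : Matrix m m R} {x : m → R} (hx : A *ᵥ x = 0) {i : m}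
    (hi : x i = 1) : A.det = 0 := by
  have h : (A.adjugate * A) *ᵥ x = 0 := by rw [← mulVec_mulVec, hx, mulVec_zero]
  simpa [adjugate_mul, smul_mulVec, hi] using congrFun h i

theorem det_eq_prod_diag_of_rank {α : Type*} [LinearOrder α] {A : Matrix m m R} (d : m → α)
    (h : ∀ i j, i ≠ j → d i ≤ d j → A i j = 0) : A.det = ∏ i, A i i := by
  have htri : A.BlockTriangular (OrderDual.toDual ∘ d) := fun i j hij ↦
    h i j (ne_of_apply_ne _ hij.ne') (le_of_lt hij)
  have hblock (a : αᵒᵈ) : (A.toSquareBlock (OrderDual.toDual ∘ d) a).det =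
      ∏ i with (OrderDual.toDual ∘ d) i = a, A i i := by
    have hdiag : A.toSquareBlock (OrderDual.toDual ∘ d) a = diagonal fun i ↦ A i.1 i.1 := by
      ext i j
      obtain rfl | hij := eq_or_ne i j
      · simp [toSquareBlock_def]
      · have hd : d i = d j := OrderDual.toDual.injective (i.2.trans j.2.symm)
        simp [hij, toSquareBlock_def, h i j (Subtype.coe_injective.ne hij) hd.le]
    rw [hdiag, det_diagonal]
    exact (Finset.prod_subtype _ (by simp) fun i ↦ A i i).symm
  rw [htri.det, Finset.prod_congr rfl fun a _ ↦ hblock a]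
  exact Finset.prod_fiberwise_of_maps_to (fun i _ ↦ Finset.mem_image_of_mem _ (Finset.mem_univ i)) _

theorem det_updateRow_of_mulVec_one_eq_zero {A : Matrix m m R} (hA : A *ᵥ 1 = 0) (r : m)
    (w : m → R) : (A.updateRow r w).det = (∑ i, w i) * A.adjugate r r := by
  have hdet : (A.updateRow r (w - (∑ i, w i) • Pi.single r 1)).det = 0 := by
    refine det_eq_zero_of_mulVec_eq_zero (x := 1) (i := r) ?_ rfl
    funext i
    obtain rfl | hi := eq_or_ne i r
    · simp [mulVec, dotProduct_one, ← Finset.mul_sum]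
    · simpa [mulVec, updateRow_ne hi] using congrFun hA i
  calc (A.updateRow r w).det
      = (A.updateRow r ((w - (∑ i, w i) • Pi.single r 1) + (∑ i, w i) • Pi.single r 1)).det := by
        rw [sub_add_cancel]
    _ = (∑ i, w i) * A.adjugate r r := by
        rw [det_updateRow_add, hdet, zero_add, det_updateRow_smul, adjugate_apply]

theorem det_add_const_of_sums_eq_zero {A : Matrix m m R} (hrow : A *ᵥ 1 = 0) (hcol : 1 ᵥ* A = 0)
    (t : R) (r : m) :
    (A + of fun _ _ ↦ t).det = t * (Fintype.card m : R) ^ 2 * A.adjugate r r := by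
  set B : Matrix m m R := A + of fun _ _ ↦ t
  have hB_apply (i j : m) : B i j = A i j + t := rfl
  have hsum : ∑ i, (1 : R) • B i = (t * Fintype.card m) • 1 := by
    funext j
    have hj : ∑ i, A i j = 0 := by simpa [vecMul, dotProduct] using congrFun hcol j
    rw [Finset.sum_apply]
    simp [hB_apply, Finset.sum_add_distrib, hj, mul_comm]
  have hreplace : (B.updateRow r 1).det = (A.updateRow r 1).det := by
    refine det_eq_of_forall_row_eq_smul_add_const (fun i ↦ if i = r then 0 else t) r (by simp) ?_
    intro i j
    by_cases hi : i = r <;> simp [updateRow_apply, hB_apply, hi]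
  calc B.det
      = (B.updateRow r ((t * Fintype.card m) • 1)).det := by
        rw [← hsum, det_updateRow_sum, one_smul]
    _ = t * Fintype.card m * (A.updateRow r 1).det := by rw [det_updateRow_smul, hreplace]
    _ = t * (Fintype.card m : R) ^ 2 * A.adjugate r r := by
        rw [det_updateRow_of_mulVec_one_eq_zero hrow]
        simp [sq, mul_assoc]

theorem det_fromBlocks_swap (A B : Matrix m m R) :
    (fromBlocks A B B A).det = (A + B).det * (A - B).det := by
  have h : fromBlocks 1 0 (-1) 1 * (fromBlocks A B B A * fromBlocks 1 0 1 1) =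
      fromBlocks (A + B) B 0 (A - B) := by
    simp only [fromBlocks_multiply]
    congr 1 <;> simp
    · abel
    · abel
  simpa using congrArg det h

end Determinant

section ParentMap

variable {V : Type*} {r : V} {f g : V → V} {G : SimpleGraph V}

/-- `f` sends every vertex other than the root `r` to a neighbour, and iterating it leads every
vertex to `r`. Such maps encode the spanning trees of `G`: `f v` is the next vertex on the way from
`v` to `r`. The value at the root, which carries no information, is fixed to be `r`. -/
structure IsParentMap (G : SimpleGraph V) (r : V) (f : V → V) : Prop where
  map_root : f r = r
  adj : ∀ v ≠ r, G.Adj v (f v)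
  exists_iterate_eq : ∀ v, ∃ k, f^[k] v = r

/-- The graph formed by the edges from each vertex `v ≠ r` to its parent `f v`. -/
def parentGraph (r : V) (f : V → V) : SimpleGraph V :=
  SimpleGraph.fromRel fun v w ↦ v ≠ r ∧ f v = w

theorem exists_iterate_eq_iff_of_ne {v : V} (hv : v ≠ r) :
    (∃ k, f^[k] v = r) ↔ ∃ k, f^[k] (f v) = r := by
  refine ⟨?_, fun ⟨k, hk⟩ ↦ ⟨k + 1, hk⟩⟩
  rintro ⟨_ | k, hk⟩
  · exact absurd hk hv
  · exact ⟨k, hk⟩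

theorem forall_exists_iterate_eq_iff_exists_rank :
    (∀ v, ∃ k, f^[k] v = r) ↔ ∃ d : V → ℕ, ∀ v ≠ r, d (f v) < d v := by
  classical
  constructor
  · refine fun h ↦ ⟨fun v ↦ Nat.find (h v), fun v hv ↦ (Nat.lt_find_iff _ _).2 fun k hk hkr ↦ ?_⟩
    cases k with
    | zero => exact hv hkr
    | succ k => exact Nat.find_min (h (f v)) hk hkr
  · rintro ⟨d, hd⟩ v
    induction hn : d v using Nat.strong_induction_on generalizing v with
    | _ n ih =>
      by_cases hv : v = r
      · exact ⟨0, hv⟩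
      · exact (exists_iterate_eq_iff_of_ne hv).2 (ih _ (hn ▸ hd v hv) _ rfl)

theorem parentGraph_le (h : ∀ v ≠ r, G.Adj v (f v)) : parentGraph r f ≤ G := by
  rintro v w ⟨-, ⟨hv, rfl⟩ | ⟨hw, rfl⟩⟩
  · exact h v hv
  · exact (h w hw).symm

namespace IsParentMap

theorem parentGraph_adj (h : IsParentMap G r f) {v : V} (hv : v ≠ r) :
    (parentGraph r f).Adj v (f v) :=
  ⟨(h.adj v hv).ne, Or.inl ⟨hv, rfl⟩⟩

theorem connected_parentGraph (h : IsParentMap G r f) : (parentGraph r f).Connected := by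
  have hroot (v : V) : (parentGraph r f).Reachable v r := by
    obtain ⟨k, hk⟩ := h.exists_iterate_eq v
    induction k generalizing v with
    | zero => exact hk ▸ .rfl
    | succ k ih =>
      by_cases hv : v = r
      · exact hv ▸ .rfl
      · exact (h.parentGraph_adj hv).reachable.trans (ih _ hk)
  exact { preconnected := fun v w ↦ (hroot v).trans (hroot w).symm, nonempty := ⟨r⟩ }

theorem isTree_parentGraph [Finite V] (h : IsParentMap G r f) : (parentGraph r f).IsTree := by
  have hedges : (parentGraph r f).edgeSet ⊆ (fun v ↦ s(v, f v)) '' {r}ᶜ := by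
    intro e
    induction e with
    | _ v w =>
      rintro (hvw : (parentGraph r f).Adj v w)
      obtain ⟨-, ⟨hv, rfl⟩ | ⟨hw, rfl⟩⟩ := hvw
      · exact ⟨v, hv, rfl⟩
      · exact ⟨w, hw, Sym2.eq_swap⟩
  have hcard : (parentGraph r f).edgeSet.ncard ≤ ({r}ᶜ : Set V).ncard :=
    (Set.ncard_le_ncard hedges (Set.toFinite _)).trans (Set.ncard_image_le (Set.toFinite _))
  have hcompl := Set.ncard_add_ncard_compl {r}
  rw [Set.ncard_singleton] at hcompl
  refine SimpleGraph.isTree_iff_connected_and_card.2 ⟨h.connected_parentGraph, le_antisymm ?_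
    h.connected_parentGraph.card_vert_le_card_edgeSet_add_one⟩
  rw [Nat.card_coe_set_eq]
  omega

/-- Where `f` and `g` differ, the edge from `v` to `f v` must be the `g`-edge from `f v` to `v`, so
`f` and `g` also differ at `f v`, which is closer to the root. -/
theorem eq_of_parentGraph_eq (hf : IsParentMap G r f) (hg : IsParentMap G r g)
    (h : parentGraph r f = parentGraph r g) : f = g := by
  obtain ⟨d, hd⟩ := forall_exists_iterate_eq_iff_exists_rank.1 hf.exists_iterate_eq
  funext v
  induction hn : d v using Nat.strong_induction_on generalizing v with
  | _ n ih =>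
    by_cases hv : v = r
    · rw [hv, hf.map_root, hg.map_root]
    · obtain ⟨-, ⟨-, hgv⟩ | ⟨hfv, hgfv⟩⟩ := h ▸ hf.parentGraph_adj hv
      · exact hgv.symm
      · have hffv : f (f v) = v := (ih _ (hn ▸ hd v hv) (f v) rfl).trans hgfv
        have hlt : d v < d (f v) := by simpa only [hffv] using hd (f v) hfv
        exact absurd (hd v hv) hlt.asymm

end IsParentMap

theorem exists_isParentMap_parentGraph_eq {T : SimpleGraph V} (hT : T.IsTree) (r : V) :
    ∃ f, IsParentMap T r f ∧ parentGraph r f = T := by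
  have hparent (v : V) (hv : v ≠ r) : ∃ w, T.Adj v w ∧ T.dist w r < T.dist v r := by
    obtain ⟨p, hp⟩ := hT.connected.exists_walk_length_eq_dist v r
    cases p with
    | nil => exact absurd rfl hv
    | cons hadj q =>
      rw [SimpleGraph.Walk.length_cons] at hp
      exact ⟨_, hadj, by have := SimpleGraph.dist_le q; omega⟩
  classical
  choose f hadj hdist using hparent
  let p : V → V := fun v ↦ if hv : v = r then r else f v hv
  have hp : IsParentMap T r p :=
    { map_root := by simp [p]
      adj := fun v hv ↦ by simpa [p, hv] using hadj v hv
      exists_iterate_eq := forall_exists_iterate_eq_iff_exists_rank.2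
        ⟨fun v ↦ T.dist v r, fun v hv ↦ by simpa [p, hv] using hdist v hv⟩ }
  have hle : parentGraph r p ≤ T := parentGraph_le hp.adj
  exact ⟨p, hp, hle.antisymm <|
    (SimpleGraph.isTree_iff_minimal_connected.1 hT).2 hp.connected_parentGraph hle⟩

theorem IsParentMap.mono {G' : SimpleGraph V} (h : IsParentMap G r f) (hle : G ≤ G') :
    IsParentMap G' r f :=
  ⟨h.map_root, fun v hv ↦ hle (h.adj v hv), h.exists_iterate_eq⟩

theorem numSpanningTrees_eq_card_isTree (G : SimpleGraph V) :
    numSpanningTrees G = Nat.card {T : SimpleGraph V // T ≤ G ∧ T.IsTree} :=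
  Nat.card_congr
    { toFun := fun H ↦ ⟨H.1.spanningCoe, H.1.spanningCoe_le,
        (H.1.spanningCoeEquivCoeOfSpanning H.2.1).isTree_iff.2 H.2.2⟩
      invFun := fun T ↦ ⟨SimpleGraph.toSubgraph T.1 T.2.1, SimpleGraph.toSubgraph.isSpanning _ _,
        (SimpleGraph.Subgraph.spanningCoeEquivCoeOfSpanning _
          (SimpleGraph.toSubgraph.isSpanning _ _)).isTree_iff.1 T.2.2⟩
      left_inv := fun H ↦ Subtype.ext <|
        SimpleGraph.Subgraph.ext (SimpleGraph.Subgraph.isSpanning_iff.1 H.2.1).symm rfl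
      right_inv := fun _ ↦ rfl }

theorem numSpanningTrees_eq_card_isParentMap [Finite V] (G : SimpleGraph V) (r : V) :
    numSpanningTrees G = Nat.card {f : V → V // IsParentMap G r f} := by
  rw [numSpanningTrees_eq_card_isTree]
  symm
  refine Nat.card_congr <| Equiv.ofBijective
    (fun f ↦ ⟨parentGraph r f.1, parentGraph_le f.2.adj, f.2.isTree_parentGraph⟩) ⟨?_, ?_⟩
  · exact fun f g hfg ↦ Subtype.ext (f.2.eq_of_parentGraph_eq g.2 (congrArg Subtype.val hfg))
  · rintro ⟨T, hle, hT⟩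
    obtain ⟨f, hf, rfl⟩ := exists_isParentMap_parentGraph_eq hT r
    exact ⟨⟨f, hf.mono hle⟩, rfl⟩

end ParentMap

section MatrixTree

variable {V R : Type*} [Fintype V] [DecidableEq V] [CommRing R]

/-- The Laplacian of the directed graph with one arc `v → f v` for each `v ≠ r`, with the row of the
root `r` replaced by the corresponding row of the identity matrix. -/
def rootedLaplacian (R : Type*) [CommRing R] (r : V) (f : V → V) : Matrix V V R :=
  of fun v ↦ if v = r then Pi.single r 1 else Pi.single v 1 - Pi.single (f v) 1

theorem det_rootedLaplacian_of_reaches {r : V} {f : V → V} (hf : ∀ v, ∃ k, f^[k] v = r) :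
    (rootedLaplacian R r f).det = 1 := by
  obtain ⟨d, hd⟩ := forall_exists_iterate_eq_iff_exists_rank.1 hf
  have hparent {v w : V} (hv : v ≠ r) (hvw : d v ≤ d w) : w ≠ f v := by
    rintro rfl
    exact (hd v hv).not_ge hvw
  rw [det_eq_prod_diag_of_rank d fun v w hvw hd ↦ ?_]
  · refine Finset.prod_eq_one fun v _ ↦ ?_
    obtain rfl | hv := eq_or_ne v r
    · simp [rootedLaplacian]
    · simp [rootedLaplacian, hv, hparent hv le_rfl]
  · obtain rfl | hv := eq_or_ne v r
    · simp [rootedLaplacian, hvw.symm]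
    · simp [rootedLaplacian, hv, hvw.symm, hparent hv hd]

theorem det_rootedLaplacian_of_not_reaches {r : V} {f : V → V} (hf : ¬∀ v, ∃ k, f^[k] v = r) :
    (rootedLaplacian R r f).det = 0 := by
  classical
  obtain ⟨v₀, hv₀⟩ := not_forall.1 hf
  -- The indicator of the vertices not leading to `r` is in the kernel.
  refine det_eq_zero_of_mulVec_eq_zero (x := fun v ↦ if ∃ k, f^[k] v = r then 0 else 1) ?_
    (if_neg hv₀)
  funext v
  obtain rfl | hv := eq_or_ne v r
  · simpa [mulVec, rootedLaplacian] using fun h ↦ (h 0 rfl).elim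
  · simp only [mulVec, rootedLaplacian, of_apply, if_neg hv, sub_dotProduct, single_one_dotProduct,
      exists_iterate_eq_iff_of_ne hv, sub_self, Pi.zero_apply]

variable (G : SimpleGraph V) [DecidableRel G.Adj]

theorem lapMatrix_row (v : V) :
    G.lapMatrix R v = ∑ w ∈ G.neighborFinset v, (Pi.single v 1 - Pi.single w 1) := by
  funext x
  simp [SimpleGraph.lapMatrix, SimpleGraph.degMatrix, diagonal_apply, Pi.single_apply, eq_comm,
    SimpleGraph.adjMatrix_apply]

/-- The vertices a parent map of `G` with root `r` may assign to each vertex. -/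
def parentChoices (r : V) : V → Finset V :=
  Function.update (fun v ↦ G.neighborFinset v) r {r}

/-- Multilinear expansion: choosing one term of `lapMatrix_row` in each row other than the root's is
choosing a candidate parent map. -/
theorem det_lapMatrix_updateRow_eq_sum (r : V) :
    ((G.lapMatrix R).updateRow r (Pi.single r 1)).det =
      ∑ f ∈ Fintype.piFinset (parentChoices G r),
        (rootedLaplacian R r f).det := by
  have hrows : (G.lapMatrix R).updateRow r (Pi.single r 1) =
      of fun v ↦ ∑ w ∈ parentChoices G r v,
        if v = r then Pi.single r 1 else Pi.single v 1 - Pi.single w 1 := by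
    ext v x
    obtain rfl | hv := eq_or_ne v r
    · simp [parentChoices]
    · simp [parentChoices, hv, lapMatrix_row]
  rw [hrows]
  exact (detRowAlternating (R := R) (n := V)).toMultilinearMap.map_sum_finset _ _

theorem isParentMap_iff_mem_piFinset (r : V) (f : V → V) :
    IsParentMap G r f ↔ f ∈ Fintype.piFinset (parentChoices G r) ∧
      ∀ v, ∃ k, f^[k] v = r := by
  rw [Fintype.mem_piFinset, parentChoices, Function.forall_update_iff _ fun v s ↦ f v ∈ s]
  simp only [Finset.mem_singleton, SimpleGraph.mem_neighborFinset]
  exact ⟨fun ⟨hr, ha, hk⟩ ↦ ⟨⟨hr, ha⟩, hk⟩, fun ⟨⟨hr, ha⟩, hk⟩ ↦ ⟨hr, ha, hk⟩⟩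

theorem adjugate_lapMatrix_eq_numSpanningTrees (r : V) :
    (G.lapMatrix R).adjugate r r = numSpanningTrees G := by
  classical
  have hdet (f : V → V) :
      (rootedLaplacian R r f).det = if ∀ v, ∃ k, f^[k] v = r then 1 else 0 := by
    split_ifs with hf
    · exact det_rootedLaplacian_of_reaches hf
    · exact det_rootedLaplacian_of_not_reaches hf
  simp_rw [adjugate_apply, det_lapMatrix_updateRow_eq_sum, hdet, Finset.sum_boole]
  rw [numSpanningTrees_eq_card_isParentMap G r, Nat.subtype_card _ fun f ↦ ?_]
  rw [Finset.mem_filter, isParentMap_iff_mem_piFinset]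

theorem det_lapMatrix_add_const [Nonempty V] (t : R) :
    (G.lapMatrix R + of fun _ _ ↦ t).det =
      t * (Fintype.card V : R) ^ 2 * numSpanningTrees G := by
  have hrow : G.lapMatrix R *ᵥ 1 = 0 := G.lapMatrix_mulVec_const_eq_zero
  have hcol : 1 ᵥ* G.lapMatrix R = 0 := by rw [← mulVec_transpose, (G.isSymm_lapMatrix R).eq, hrow]
  obtain ⟨r⟩ := ‹Nonempty V›
  rw [det_add_const_of_sums_eq_zero hrow hcol t r, adjugate_lapMatrix_eq_numSpanningTrees]

end MatrixTree

section Prism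

variable {V : Type*}

/-- The prism over `G`, i.e. the Cartesian product of `G` with a single edge. It is given the vertex
type `V ⊕ V`, rather than `V × Bool`, so that its Laplacian is a block matrix. -/
def prism (G : SimpleGraph V) : SimpleGraph (V ⊕ V) where
  Adj
    | .inl v, .inl w | .inr v, .inr w => G.Adj v w
    | .inl v, .inr w | .inr v, .inl w => v = w
  symm := ⟨by rintro (v | v) (w | w) h <;> exact h.symm⟩
  loopless := ⟨by rintro (v | v) <;> exact G.irrefl⟩

@[simp]
theorem prism_adj_inl_inl {G : SimpleGraph V} {v w : V} :
    (prism G).Adj (.inl v) (.inl w) ↔ G.Adj v w :=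
  Iff.rfl

@[simp]
theorem prism_adj_inl_inr {G : SimpleGraph V} {v w : V} :
    (prism G).Adj (.inl v) (.inr w) ↔ v = w :=
  Iff.rfl

@[simp]
theorem prism_adj_inr_inl {G : SimpleGraph V} {v w : V} :
    (prism G).Adj (.inr v) (.inl w) ↔ v = w :=
  Iff.rfl

@[simp]
theorem prism_adj_inr_inr {G : SimpleGraph V} {v w : V} :
    (prism G).Adj (.inr v) (.inr w) ↔ G.Adj v w :=
  Iff.rfl

variable [Fintype V] (G : SimpleGraph V) [DecidableRel G.Adj]

theorem degree_prism [DecidableRel (prism G).Adj] (v : V ⊕ V) :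
    (prism G).degree v = v.elim (fun w ↦ G.degree w) (fun w ↦ G.degree w) + 1 := by
  cases v with
  | inl v =>
    have h : (prism G).neighborFinset (.inl v) = (G.neighborFinset v).disjSum {v} := by
      ext (w | w) <;> simp [eq_comm]
    simp [← SimpleGraph.card_neighborFinset_eq_degree, h]
  | inr v =>
    have h : (prism G).neighborFinset (.inr v) = Finset.disjSum {v} (G.neighborFinset v) := by
      ext (w | w) <;> simp [eq_comm]
    simp [← SimpleGraph.card_neighborFinset_eq_degree, h, add_comm]

variable {R : Type*} [DecidableEq V] [CommRing R]

theorem lapMatrix_prism [DecidableRel (prism G).Adj] :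
    (prism G).lapMatrix R = fromBlocks (G.lapMatrix R + 1) (-1) (-1) (G.lapMatrix R + 1) := by
  ext (v | v) (w | w) <;> obtain rfl | hvw := eq_or_ne v w <;>
    simp [SimpleGraph.lapMatrix, SimpleGraph.degMatrix, SimpleGraph.adjMatrix_apply,
      degree_prism, *]

theorem two_mul_numSpanningTrees_prism [IsDomain R] [CharZero R] [Nonempty V] :
    2 * (numSpanningTrees (prism G) : R) = numSpanningTrees G * (G.lapMatrix R + 2).det := by
  classical
  have hblocks : (prism G).lapMatrix R + of (fun _ _ ↦ 1) =
      fromBlocks (G.lapMatrix R + 1 + of fun _ _ ↦ 1) (-1 + of fun _ _ ↦ 1)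
        (-1 + of fun _ _ ↦ 1) (G.lapMatrix R + 1 + of fun _ _ ↦ 1) := by
    rw [lapMatrix_prism]
    ext (v | v) (w | w) <;> rfl
  have hsum : G.lapMatrix R + 1 + of (fun _ _ ↦ 1) + (-1 + of fun _ _ ↦ 1) =
      G.lapMatrix R + of fun _ _ ↦ 2 := by
    ext v w
    simp only [Matrix.add_apply, Matrix.neg_apply, of_apply]
    ring
  have hdiff : G.lapMatrix R + 1 + of (fun _ _ ↦ 1) - (-1 + of fun _ _ ↦ 1) =
      G.lapMatrix R + 2 := by
    rw [← one_add_one_eq_two]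
    abel
  have hcard : (Fintype.card V : R) ≠ 0 := Nat.cast_ne_zero.2 Fintype.card_ne_zero
  have hdet := det_lapMatrix_add_const (prism G) (1 : R)
  rw [hblocks, det_fromBlocks_swap, hsum, hdiff, det_lapMatrix_add_const, Fintype.card_sum] at hdet
  push_cast at hdet
  refine mul_left_cancel₀ (mul_ne_zero two_ne_zero (pow_ne_zero 2 hcard)) ?_
  linear_combination -hdet

end Prism

section Circulant

theorem circulant_mulVec_addChar {A R : Type*} [AddCommGroup A] [Fintype A] [CommRing R]
    (c : A → R) (ψ : AddChar A R) :
    circulant c *ᵥ ψ = (∑ a, c a * ψ (-a)) • ⇑ψ := by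
  funext a
  calc ∑ b, c (a - b) * ψ b
      = ∑ b, c b * ψ (a - b) := by
        simpa using Equiv.sum_comp (Equiv.subLeft a) fun b ↦ c b * ψ (a - b)
    _ = (∑ b, c b * ψ (-b)) * ψ a := by
        simp only [sub_eq_neg_add, AddChar.map_add_eq_mul, Finset.sum_mul, mul_assoc]

variable {A : Type*} [AddCommGroup A] [Fintype A] [DecidableEq A]

theorem det_circulant (c : A → ℂ) : (circulant c).det = ∏ ψ : AddChar A ℂ, ∑ a, c a * ψ a := by
  classical
  have hdiag : LinearMap.toMatrix (AddChar.complexBasis A) (AddChar.complexBasis A)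
      (toLin' (circulant c)) = diagonal fun ψ ↦ ∑ a, c a * ψ (-a) := by
    ext ψ χ
    rw [LinearMap.toMatrix_apply, AddChar.complexBasis_apply, toLin'_apply,
      circulant_mulVec_addChar, ← AddChar.complexBasis_apply, map_smul, Module.Basis.repr_self]
    obtain rfl | h := eq_or_ne ψ χ <;> simp [*]
  rw [← LinearMap.det_toLin', ← LinearMap.det_toMatrix (AddChar.complexBasis A), hdiag,
    det_diagonal, ← Equiv.prod_comp (Equiv.neg _)]
  simp [AddChar.neg_apply]

theorem neighborFinset_circulantGraph_singleton {a : A} (ha : a ≠ 0) (b : A) :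
    (SimpleGraph.circulantGraph {a}).neighborFinset b = {b - a, b + a} := by
  ext c
  rw [SimpleGraph.mem_neighborFinset, SimpleGraph.circulantGraph_adj, Finset.mem_insert,
    Finset.mem_singleton, Set.mem_singleton_iff, Set.mem_singleton_iff]
  grind

theorem lapMatrix_circulantGraph_singleton {R : Type*} [CommRing R] {a : A} (ha : a ≠ -a) :
    (SimpleGraph.circulantGraph {a}).lapMatrix R =
      circulant (Pi.single 0 2 - Pi.single a 1 - Pi.single (-a) 1) := by
  have ha₀ : a ≠ 0 := by
    rintro rfl
    exact ha neg_zero.symm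
  have hne (b : A) : b - a ≠ b + a := by simpa [sub_eq_add_neg] using ha.symm
  ext b c
  have h₀ : b - c = 0 ↔ c = b := by rw [sub_eq_zero, eq_comm]
  have h₁ : b - c = a ↔ c = b - a := by grind
  have h₂ : b - c = -a ↔ c = b + a := by grind
  rw [lapMatrix_row, neighborFinset_circulantGraph_singleton ha₀, Finset.sum_pair (hne b)]
  simp only [Pi.add_apply, Pi.sub_apply, Pi.single_apply, circulant_apply, h₀, h₁, h₂]
  grind

theorem det_lapMatrix_circulantGraph_add_circulant {a : A} (ha : a ≠ -a) (c : A → ℂ) :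
    ((SimpleGraph.circulantGraph {a}).lapMatrix ℂ + circulant c).det =
      ∏ ψ : AddChar A ℂ, (2 - ψ a - (ψ a)⁻¹ + ∑ b, c b * ψ b) := by
  rw [lapMatrix_circulantGraph_singleton ha, ← circulant_add, det_circulant]
  simp [add_mul, sub_mul, Finset.sum_add_distrib, Finset.sum_sub_distrib, Pi.single_apply,
    AddChar.map_neg_eq_inv]

end Circulant

section RootsOfUnity

variable {n : ℕ}

theorem prod_addChar_zmod_apply_one [NeZero n] {K M : Type*} [CommRing K] [IsDomain K]
    [Fintype (AddChar (ZMod n) K)] [CommMonoid M] (f : K → M) :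
    ∏ ψ : AddChar (ZMod n) K, f (ψ 1) = ∏ ξ ∈ nthRootsFinset n (1 : K), f ξ := by
  have hpow (ψ : AddChar (ZMod n) K) : ψ 1 ^ n = 1 := by
    rw [← AddChar.map_nsmul_eq_pow, nsmul_one, ZMod.natCast_self, AddChar.map_zero_eq_one]
  refine Finset.prod_bij (fun ψ _ ↦ ψ 1) (fun ψ _ ↦ ?_) (fun ψ _ χ _ h ↦ ?_) (fun ξ hξ ↦ ?_)
    fun _ _ ↦ rfl
  · exact (mem_nthRootsFinset (NeZero.pos n) 1).2 (hpow ψ)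
  · ext a
    rw [← ZMod.natCast_zmod_val a, ← nsmul_one, AddChar.map_nsmul_eq_pow, AddChar.map_nsmul_eq_pow,
      h]
  · have hξ' := (mem_nthRootsFinset (NeZero.pos n) 1).1 hξ
    refine ⟨AddChar.zmodChar n hξ', Finset.mem_univ _, ?_⟩
    simpa using AddChar.zmodChar_apply' hξ' 1

variable {K : Type*} [Field K] [NeZero n]

theorem prod_inv_of_inv_mem {α M : Type*} [InvolutiveInv α] [CommMonoid M] {s : Finset α}
    (hs : ∀ a ∈ s, a⁻¹ ∈ s) (f : α → M) : ∏ a ∈ s, f a⁻¹ = ∏ a ∈ s, f a :=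
  Finset.prod_nbij' (·⁻¹) (·⁻¹) hs hs (by simp) (by simp) (by simp)

theorem inv_mem_nthRootsFinset_one {ξ : K} (hξ : ξ ∈ nthRootsFinset n (1 : K)) :
    ξ⁻¹ ∈ nthRootsFinset n (1 : K) := by
  rw [mem_nthRootsFinset (NeZero.pos n)] at hξ ⊢
  rw [inv_pow, hξ, inv_one]

variable {ζ : K}

theorem prod_nthRootsFinset_erase_one_sub [DecidableEq K] (hζ : IsPrimitiveRoot ζ n) :
    ∏ ξ ∈ (nthRootsFinset n (1 : K)).erase 1, (1 - ξ) = n := by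
  have h := X_pow_sub_one_eq_prod (NeZero.pos n) hζ
  rw [← Finset.mul_prod_erase _ _ (one_mem_nthRootsFinset (NeZero.pos n)), C_1, ← mul_geom_sum] at h
  have hgeom := congrArg (eval 1) (mul_left_cancel₀ (X_sub_C_ne_zero 1) h)
  simpa [eval_prod, eval_finsetSum] using hgeom.symm

theorem prod_nthRootsFinset_add_inv_sub_sub_inv (hζ : IsPrimitiveRoot ζ n) {u : K} (hu : u ≠ 0) :
    ∏ ξ ∈ nthRootsFinset n (1 : K), (u + u⁻¹ - ξ - ξ⁻¹) = u ^ n + (u ^ n)⁻¹ - 2 := by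
  have hn : 0 < n := NeZero.pos n
  have hfactor (ξ : K) (hξ : ξ ∈ nthRootsFinset n (1 : K)) :
      u + u⁻¹ - ξ - ξ⁻¹ = (u - ξ * 1) * (1 - ξ⁻¹ * u⁻¹) := by
    have hξ₀ : ξ ≠ 0 := ne_zero_of_mem_nthRootsFinset one_ne_zero hξ
    field_simp
    ring
  rw [Finset.prod_congr rfl hfactor, Finset.prod_mul_distrib,
    prod_inv_of_inv_mem (fun _ ↦ inv_mem_nthRootsFinset_one) fun ξ ↦ 1 - ξ * u⁻¹,
    ← hζ.pow_sub_pow_eq_prod_sub_mul _ _ hn, ← hζ.pow_sub_pow_eq_prod_sub_mul _ _ hn, one_pow,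
    inv_pow]
  have hun : u ^ n ≠ 0 := pow_ne_zero n hu
  field_simp
  ring

theorem prod_nthRootsFinset_erase_two_sub_sub_inv [DecidableEq K] (hζ : IsPrimitiveRoot ζ n) :
    ∏ ξ ∈ (nthRootsFinset n (1 : K)).erase 1, (2 - ξ - ξ⁻¹) = n ^ 2 := by
  have hinv (ξ : K) (hξ : ξ ∈ (nthRootsFinset n (1 : K)).erase 1) :
      ξ⁻¹ ∈ (nthRootsFinset n (1 : K)).erase 1 := by
    rw [Finset.mem_erase] at hξ ⊢
    exact ⟨inv_ne_one.2 hξ.1, inv_mem_nthRootsFinset_one hξ.2⟩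
  have hfactor (ξ : K) (hξ : ξ ∈ (nthRootsFinset n (1 : K)).erase 1) :
      2 - ξ - ξ⁻¹ = (1 - ξ) * (1 - ξ⁻¹) := by
    have hξ₀ : ξ ≠ 0 := ne_zero_of_mem_nthRootsFinset one_ne_zero (Finset.mem_of_mem_erase hξ)
    field_simp
    ring
  rw [Finset.prod_congr rfl hfactor, Finset.prod_mul_distrib,
    prod_inv_of_inv_mem hinv fun ξ ↦ 1 - ξ, prod_nthRootsFinset_erase_one_sub hζ, sq]

theorem prod_nthRootsFinset_two_mul_sub_sub_inv (x : ℂ) :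
    ∏ ξ ∈ nthRootsFinset n (1 : ℂ), (2 * x - ξ - ξ⁻¹) =
      2 * ((Polynomial.Chebyshev.T ℂ n).eval x - 1) := by
  obtain ⟨φ, rfl⟩ := Complex.cos_surjective x
  have hζ := Complex.isPrimitiveRoot_exp n (NeZero.ne n)
  have htwo_cos (θ : ℂ) :
      2 * Complex.cos θ = Complex.exp (θ * Complex.I) + (Complex.exp (θ * Complex.I))⁻¹ := by
    rw [Complex.two_cos, neg_mul, Complex.exp_neg]
  rw [htwo_cos, prod_nthRootsFinset_add_inv_sub_sub_inv hζ (Complex.exp_ne_zero _),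
    Polynomial.Chebyshev.T_complex_cos, mul_sub, htwo_cos, ← Complex.exp_nat_mul, mul_one,
    Int.cast_natCast, mul_assoc]

end RootsOfUnity

section Cycle

/-- The cycle graph on `n` vertices, with vertex type `ZMod n` rather than the `Fin n` of
`SimpleGraph.cycleGraph`. -/
abbrev zmodCycle (n : ℕ) : SimpleGraph (ZMod n) :=
  SimpleGraph.circulantGraph {1}

theorem genPetersen_one (n : ℕ) : genPetersen n 1 = prism (zmodCycle n) := by
  ext (i | i) (j | j) <;>
    simp only [genPetersen, gpRel, SimpleGraph.fromRel_adj, SimpleGraph.circulantGraph_adj,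
      prism_adj_inl_inl, prism_adj_inl_inr, prism_adj_inr_inl, prism_adj_inr_inr,
      Set.mem_singleton_iff, Nat.cast_one] <;>
    grind

variable {n : ℕ} [NeZero n] [Fact (2 < n)]

theorem det_lapMatrix_zmodCycle_add_two :
    ((zmodCycle n).lapMatrix ℂ + 2).det = 2 * ((Polynomial.Chebyshev.T ℂ n).eval 2 - 1) := by
  have hcirculant : (2 : Matrix (ZMod n) (ZMod n) ℂ) = circulant (Pi.single 0 2) := by
    rw [circulant_single, map_ofNat]
  have hfactor (ψ : AddChar (ZMod n) ℂ) :
      2 - ψ 1 - (ψ 1)⁻¹ + ∑ b, (Pi.single 0 2 : ZMod n → ℂ) b * ψ b = 2 * 2 - ψ 1 - (ψ 1)⁻¹ := by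
    simp only [Pi.single_apply, ite_mul, zero_mul, Finset.sum_ite_eq', Finset.mem_univ, if_true,
      AddChar.map_zero_eq_one]
    ring
  rw [hcirculant, det_lapMatrix_circulantGraph_add_circulant ZMod.neg_one_ne_one.symm,
    Finset.prod_congr rfl fun ψ _ ↦ hfactor ψ,
    prod_addChar_zmod_apply_one fun ξ ↦ 2 * 2 - ξ - ξ⁻¹, prod_nthRootsFinset_two_mul_sub_sub_inv]

theorem det_lapMatrix_zmodCycle_add_one :
    ((zmodCycle n).lapMatrix ℂ + of fun _ _ ↦ 1).det = (n : ℂ) ^ 3 := by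
  classical
  have hcirculant : (of fun _ _ ↦ 1 : Matrix (ZMod n) (ZMod n) ℂ) = circulant fun _ ↦ 1 := rfl
  have hfactor (ψ : AddChar (ZMod n) ℂ) :
      2 - ψ 1 - (ψ 1)⁻¹ + ∑ b, 1 * ψ b = if ψ 1 = 1 then (n : ℂ) else 2 - ψ 1 - (ψ 1)⁻¹ := by
    have htrivial : ψ = 0 ↔ ψ 1 = 1 := not_iff_not.1 (AddChar.zmod_char_ne_one_iff n ψ)
    simp only [one_mul, AddChar.sum_eq_ite, htrivial, ZMod.card]
    split_ifs with h
    · rw [h]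
      ring
    · rw [add_zero]
  rw [hcirculant, det_lapMatrix_circulantGraph_add_circulant ZMod.neg_one_ne_one.symm,
    Finset.prod_congr rfl fun ψ _ ↦ hfactor ψ,
    prod_addChar_zmod_apply_one fun ξ ↦ if ξ = 1 then (n : ℂ) else 2 - ξ - ξ⁻¹,
    ← Finset.mul_prod_erase _ _ (one_mem_nthRootsFinset (NeZero.pos n)), if_pos rfl,
    Finset.prod_congr rfl fun ξ hξ ↦ if_neg (Finset.ne_of_mem_erase hξ),
    prod_nthRootsFinset_erase_two_sub_sub_inv (Complex.isPrimitiveRoot_exp n (NeZero.ne n))]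
  ring

theorem numSpanningTrees_zmodCycle : numSpanningTrees (zmodCycle n) = n := by
  have h : (n : ℂ) ^ 3 = 1 * n ^ 2 * numSpanningTrees (zmodCycle n) := by
    rw [← det_lapMatrix_zmodCycle_add_one, det_lapMatrix_add_const, ZMod.card]
  have hn : (n : ℂ) ^ 2 ≠ 0 := pow_ne_zero 2 (NeZero.ne _)
  have hcast : (numSpanningTrees (zmodCycle n) : ℂ) = n :=
    mul_left_cancel₀ hn (by linear_combination -h)
  exact_mod_cast hcast

theorem numSpanningTrees_prism_zmodCycle :
    (numSpanningTrees (prism (zmodCycle n)) : ℂ) =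
      n * ((Polynomial.Chebyshev.T ℂ n).eval 2 - 1) := by
  have h := two_mul_numSpanningTrees_prism (R := ℂ) (zmodCycle n)
  rw [numSpanningTrees_zmodCycle, det_lapMatrix_zmodCycle_add_two] at h
  linear_combination h / 2

end Cycle

end SpanningTrees

/-- The number of spanning trees of the prism graph `GP(n,1)` is
`n·(T_n(2) − 1)`. -/
theorem spanning_trees_prism (n : ℕ) (hn : 3 ≤ n) :
    (numSpanningTrees (genPetersen n 1) : ℤ) =
      n * ((Polynomial.Chebyshev.T ℤ n).eval 2 - 1) := by
  have : NeZero n := ⟨by omega⟩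
  have : Fact (2 < n) := ⟨hn⟩
  have hT : (Polynomial.Chebyshev.T ℂ n).eval 2 = ((Polynomial.Chebyshev.T ℤ n).eval 2 : ℤ) := by
    simpa using (Polynomial.Chebyshev.algebraMap_eval_T (R := ℤ) (R' := ℂ) 2 n).symm
  have hcount := SpanningTrees.numSpanningTrees_prism_zmodCycle (n := n)
  rw [← SpanningTrees.genPetersen_one, hT] at hcount
  exact_mod_cast hcount
end
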